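/- Let n ≥ 1, let p ∈ (−n−1, 0], and let K be a smooth, strictly convex body in ℝ^{n+1} with positive support function h satisfying det(A(x) + x⊗x) = h(x)^{p−1} for all x ∈ S^n. Set c := (∫ ∇h_K h^p dθ)/(∫ h^p dθ) and h̃(x) := h(x) − ⟨x, c⟩. Then ∫_{S^n} (|∇h_K(x) − c|² − h̃(x)²) h^p dθ ≤ (n·p·|c|²/((n+1)(n+1+p)))·∫_{S^n} h^p dθ; in particular, since p ≤ 0, the spherical gradient of h̃ vanishes identically and h̃ is constant on S^n. -/

import Mathlib

open MeasureTheory Metric Real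
open scoped InnerProductSpace ENNReal Topology

noncomputable section

/-- Euclidean space `ℝ^{n+1}`. -/
abbrev Eu (n : ℕ) : Type := EuclideanSpace ℝ (Fin (n + 1))

/-- The unit sphere `S^n ⊆ ℝ^{n+1}` as a subtype. -/
abbrev Sph (n : ℕ) : Type := Metric.sphere (0 : Eu n) 1

/-- The spherical Lebesgue (surface) measure on `S^n`. -/
def sphMeas (n : ℕ) : Measure (Sph n) := (volume : Measure (Eu n)).toSphere

/-- The support function of a set `K ⊆ ℝ^{n+1}`. -/
def sfn {n : ℕ} (K : Set (Eu n)) (z : Eu n) : ℝ :=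
  sSup ((fun y => ⟪z, y⟫_ℝ) '' K)

/-- The Hessian endomorphism `A(x) = D(∇ h_K)(x)`. -/
def hessA {n : ℕ} (K : Set (Eu n)) (x : Eu n) : Eu n →L[ℝ] Eu n :=
  fderiv ℝ (gradient (sfn K)) x

/-- The rank-one endomorphism `x ⊗ x : v ↦ ⟨v, x⟩ x`. -/
def tens {n : ℕ} (x : Eu n) : Eu n →L[ℝ] Eu n :=
  (innerSL ℝ x).smulRight x

/-- `det (A(x) + x ⊗ x)`, the reciprocal Gauss curvature `1/𝒦` at `x ∈ S^n`. -/
def rK {n : ℕ} (K : Set (Eu n)) (x : Eu n) : ℝ :=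
  LinearMap.det ((hessA K x + tens x : Eu n →L[ℝ] Eu n) : Eu n →ₗ[ℝ] Eu n)

/-- `K` is a smooth, strictly convex body with positive support function. -/
structure IsSmoothConvexBody {n : ℕ} (K : Set (Eu n)) : Prop where
  compact : IsCompact K
  convex : Convex ℝ K
  interior_nonempty : (interior K).Nonempty
  pos : ∀ x : Sph n, 0 < sfn K x
  smooth : ContDiffOn ℝ (⊤ : ℕ∞) (sfn K) {(0 : Eu n)}ᶜ
  posdef : ∀ x : Sph n, ∀ v : Eu n, v ≠ 0 →
    0 < ⟪(hessA K (x : Eu n) + tens (x : Eu n)) v, v⟫_ℝ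

/-- The density `h·det(A + x⊗x)` of the measure `dV` with respect to `dθ`. -/
def dens {n : ℕ} (K : Set (Eu n)) (x : Eu n) : ℝ := sfn K x * rK K x

/-- The centroid-type point `c(K) = (∫ ∇h_K dV)/(∫ dV)`. -/
def cK {n : ℕ} (K : Set (Eu n)) : Eu n :=
  (∫ x : Sph n, dens K x ∂sphMeas n)⁻¹ •
    ∫ x : Sph n, dens K x • gradient (sfn K) x ∂sphMeas n

/-- The support function of the translated body `K - c(K)`. -/
def tsfn {n : ℕ} (K : Set (Eu n)) (x : Eu n) : ℝ := sfn K x - ⟪x, cK K⟫_ℝ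

/-!
Let `W = h² / 2`, with gradient the duality map `∇W = h ∇h`, and let `γ` be the normalised image of
`exp (-W*)` under the inverse of `∇W`. Prékopa–Leindler for `exp (-W*)`, tilted by
`± t (⟪e, ∇W⟫ - ζ h)`, is expanded to second order at `t = 0`: it bounds the variance of the tilt
under `γ`. Integrating out the radius, for `ζ` the mean of `⟪e, ∇h⟫`, turns the bound into
`(n + 1) ∫ (⟪e, ∇h⟫ - ζ)² dV ≤ ∫ ((⟪e, ∇h⟫ - ζ)² + h ⟪e, A e⟫) dV`
for the cone measure `dV` on the sphere. When `dV = h ^ p dθ`, integration by parts on the sphere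
evaluates the terms in `A`, and summing over an orthonormal basis gives the inequality. Its right
side is nonpositive for `p ≤ 0`, while its integrand is the squared norm of the spherical gradient
of `h - ⟪·, c⟫`, which therefore vanishes.
-/

section PrekopaLeindler

open scoped Pointwise

theorem brunnMinkowski_real_of_isCompact {A B : Set ℝ} (hA : IsCompact A) (hB : IsCompact B)
    (hA₀ : A.Nonempty) (hB₀ : B.Nonempty) :
    volume A + volume B ≤ volume (A + B) := by
  obtain ⟨a, ha, hmax⟩ := hA.exists_isMaxOn hA₀ continuousOn_id
  obtain ⟨b, hb, hmin⟩ := hB.exists_isMinOn hB₀ continuousOn_id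
  -- `A + min B` and `max A + B` lie in `A + B` and share only the point `max A + min B`.
  have hdisj : AEDisjoint volume (b +ᵥ A) (a +ᵥ B) := by
    refine measure_mono_null (t := {a + b}) ?_ (by simp)
    rintro _ ⟨⟨x, hx, rfl⟩, ⟨y, hy, hxy⟩⟩
    have hxa : x ≤ a := hmax hx
    have hby : b ≤ y := hmin hy
    simp only [vadd_eq_add, Set.mem_singleton_iff] at hxy ⊢
    linarith
  have hsub : (b +ᵥ A) ∪ (a +ᵥ B) ⊆ A + B := by
    rintro _ (⟨x, hx, rfl⟩ | ⟨y, hy, rfl⟩)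
    · exact ⟨x, hx, b, hb, add_comm x b⟩
    · exact ⟨a, ha, y, hy, rfl⟩
  calc volume A + volume B = volume (b +ᵥ A) + volume (a +ᵥ B) := by simp only [measure_vadd]
    _ = volume ((b +ᵥ A) ∪ (a +ᵥ B)) :=
      (measure_union₀ (hB.vadd a).measurableSet.nullMeasurableSet hdisj).symm
    _ ≤ volume (A + B) := measure_mono hsub

theorem brunnMinkowski_real {A B : Set ℝ} (hA : MeasurableSet A) (hB : MeasurableSet B)
    (hA₀ : A.Nonempty) (hB₀ : B.Nonempty) :
    volume A + volume B ≤ volume (A + B) := by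
  obtain ⟨a, ha⟩ := hA₀
  obtain ⟨b, hb⟩ := hB₀
  rw [hA.measure_eq_iSup_isCompact, hB.measure_eq_iSup_isCompact]
  simp only [iSup_and']
  refine ENNReal.biSup_add_biSup_le' ⟨∅, by simp⟩ ⟨∅, by simp⟩ ?_
  rintro K ⟨hKA, hK⟩ L ⟨hLB, hL⟩
  calc volume K + volume L ≤ volume (insert a K) + volume (insert b L) := by
        gcongr <;> exact Set.subset_insert _ _
    _ ≤ volume (insert a K + insert b L) :=
      brunnMinkowski_real_of_isCompact (hK.insert a) (hL.insert b) (by simp) (by simp)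
    _ ≤ volume (A + B) := by
      gcongr
      exacts [Set.insert_subset ha hKA, Set.insert_subset hb hLB]

theorem lintegral_eq_lintegral_meas_ofReal_lt {α : Type*} [MeasurableSpace α] {μ : Measure α}
    {f : α → ℝ≥0∞} (hf : Measurable f) (hf_top : ∀ x, f x ≠ ∞) :
    ∫⁻ x, f x ∂μ = ∫⁻ t in Set.Ioi 0, μ {x | ENNReal.ofReal t < f x} := by
  have hlayer := lintegral_eq_lintegral_meas_lt μ (f := fun x ↦ (f x).toReal)
    (.of_forall fun _ ↦ ENNReal.toReal_nonneg) hf.ennreal_toReal.aemeasurable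
  simp only [ENNReal.ofReal_toReal (hf_top _)] at hlayer
  rw [hlayer]
  refine setLIntegral_congr_fun measurableSet_Ioi fun t ht ↦ ?_
  simp only [ENNReal.ofReal_lt_iff_lt_toReal (le_of_lt ht) (hf_top _)]

theorem ennreal_rpow_mul_rpow_le_add {a b : ℝ} (ha : 0 < a) (hb : 0 < b) (hab : a + b = 1)
    (x y : ℝ≥0∞) :
    x ^ a * y ^ b ≤ ENNReal.ofReal a * x + ENNReal.ofReal b * y := by
  have hpq : (a⁻¹).HolderConjugate b⁻¹ := ⟨by simpa using hab, inv_pos.2 ha, inv_pos.2 hb⟩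
  calc x ^ a * y ^ b
      ≤ (x ^ a) ^ a⁻¹ / ENNReal.ofReal a⁻¹ + (y ^ b) ^ b⁻¹ / ENNReal.ofReal b⁻¹ :=
        ENNReal.young_inequality _ _ hpq
    _ = ENNReal.ofReal a * x + ENNReal.ofReal b * y := by
      rw [ENNReal.rpow_rpow_inv ha.ne', ENNReal.rpow_rpow_inv hb.ne', ENNReal.ofReal_inv_of_pos ha,
        ENNReal.ofReal_inv_of_pos hb, div_eq_mul_inv, div_eq_mul_inv, inv_inv, inv_inv,
        mul_comm x, mul_comm y]

variable {a b : ℝ}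

theorem superlevel_add_superlevel_subset (ha : 0 < a) (hb : 0 < b) (hab : a + b = 1)
    {E : Type*} [Add E] [SMul ℝ E] {f g h : E → ℝ≥0∞}
    (hfgh : ∀ x y, f x ^ a * g y ^ b ≤ h (a • x + b • y)) (t : ℝ≥0∞) :
    a • {x | t < f x} + b • {y | t < g y} ⊆ {z | t < h z} := by
  rintro _ ⟨_, ⟨x, hx, rfl⟩, _, ⟨y, hy, rfl⟩, rfl⟩
  calc t = t ^ a * t ^ b := by
        rw [← ENNReal.rpow_add_of_nonneg _ _ ha.le hb.le, hab, ENNReal.rpow_one]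
    _ < f x ^ a * g y ^ b :=
        ENNReal.mul_lt_mul (ENNReal.rpow_lt_rpow hx ha) (ENNReal.rpow_lt_rpow hy hb)
    _ ≤ h (a • x + b • y) := hfgh x y

theorem lintegral_add_le_of_iSup_eq_one (ha : 0 < a) (hb : 0 < b) (hab : a + b = 1)
    {f g h : ℝ → ℝ≥0∞} (hf : Measurable f) (hg : Measurable g) (hh : Measurable h)
    (hf_sup : ⨆ x, f x = 1) (hg_sup : ⨆ x, g x = 1)
    (hfgh : ∀ x y, f x ^ a * g y ^ b ≤ h (a • x + b • y)) :
    ENNReal.ofReal a * (∫⁻ x, f x) + ENNReal.ofReal b * (∫⁻ x, g x) ≤ ∫⁻ x, h x := by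
  have hf_le : ∀ x, f x ≤ 1 := fun x ↦ hf_sup ▸ le_iSup f x
  have hg_le : ∀ x, g x ≤ 1 := fun x ↦ hg_sup ▸ le_iSup g x
  have hmin_ne : ∀ x, min (h x) 1 ≠ ∞ := fun x ↦ ((min_le_right _ _).trans_lt (by simp)).ne
  have hmeas : ∀ u : ℝ → ℝ≥0∞, Measurable fun t : ℝ ↦ volume {x | ENNReal.ofReal t < u x} :=
    fun u ↦ Antitone.measurable fun s t hst ↦ measure_mono fun x hx ↦
      (ENNReal.ofReal_le_ofReal hst).trans_lt hx
  have hlevel : ∀ t : ℝ,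
      ENNReal.ofReal a * volume {x | ENNReal.ofReal t < f x} +
        ENNReal.ofReal b * volume {x | ENNReal.ofReal t < g x} ≤
      volume {x | ENNReal.ofReal t < min (h x) 1} := by
    intro t
    rcases lt_or_ge (ENNReal.ofReal t) 1 with ht | ht
    · have hf₀ : {x | ENNReal.ofReal t < f x}.Nonempty := lt_iSup_iff.1 (ht.trans_eq hf_sup.symm)
      have hg₀ : {x | ENNReal.ofReal t < g x}.Nonempty := lt_iSup_iff.1 (ht.trans_eq hg_sup.symm)
      have hscale : ∀ {r : ℝ}, 0 < r → ∀ s : Set ℝ, volume (r • s) = ENNReal.ofReal r * volume s :=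
        fun hr s ↦ by simp [Measure.addHaar_smul, abs_of_pos hr]
      rw [← hscale ha, ← hscale hb]
      refine (brunnMinkowski_real ((measurableSet_lt measurable_const hf).const_smul₀ a)
        ((measurableSet_lt measurable_const hg).const_smul₀ b) hf₀.smul_set hg₀.smul_set).trans ?_
      refine measure_mono fun z hz ↦ lt_min ?_ ht
      exact superlevel_add_superlevel_subset ha hb hab hfgh _ hz
    · simp [((hf_le _).trans ht).not_gt, ((hg_le _).trans ht).not_gt]
  calc ENNReal.ofReal a * (∫⁻ x, f x) + ENNReal.ofReal b * (∫⁻ x, g x)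
      ≤ ∫⁻ x, min (h x) 1 := by
        rw [lintegral_eq_lintegral_meas_ofReal_lt hf fun x ↦ ((hf_le x).trans_lt (by simp)).ne,
          lintegral_eq_lintegral_meas_ofReal_lt hg fun x ↦ ((hg_le x).trans_lt (by simp)).ne,
          lintegral_eq_lintegral_meas_ofReal_lt (hh.min measurable_const) hmin_ne,
          ← lintegral_const_mul _ (hmeas f), ← lintegral_const_mul _ (hmeas g),
          ← lintegral_add_left ((hmeas f).const_mul _)]
        exact lintegral_mono hlevel
    _ ≤ ∫⁻ x, h x := lintegral_mono fun x ↦ min_le_left _ _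

theorem prekopaLeindler_real_of_bounded (ha : 0 < a) (hb : 0 < b) (hab : a + b = 1)
    {f g h : ℝ → ℝ≥0∞} (hf : Measurable f) (hg : Measurable g) (hh : Measurable h)
    (hf_sup : ⨆ x, f x ≠ ∞) (hg_sup : ⨆ x, g x ≠ ∞)
    (hfgh : ∀ x y, f x ^ a * g y ^ b ≤ h (a • x + b • y)) :
    (∫⁻ x, f x) ^ a * (∫⁻ x, g x) ^ b ≤ ∫⁻ x, h x := by
  set α := ⨆ x, f x
  set β := ⨆ x, g x
  rcases eq_or_ne α 0 with hα | hα
  · simp [ENNReal.iSup_eq_zero.1 hα, ha]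
  rcases eq_or_ne β 0 with hβ | hβ
  · simp [ENNReal.iSup_eq_zero.1 hβ, hb]
  have hc₀ : α⁻¹ ^ a * β⁻¹ ^ b ≠ 0 := by simp [*]
  have hc_top : α⁻¹ ^ a * β⁻¹ ^ b ≠ ∞ :=
    ENNReal.mul_ne_top (by simp [*]) (by simp [*])
  have hmul : ∀ u v : ℝ≥0∞, (α⁻¹ * u) ^ a * (β⁻¹ * v) ^ b =
      α⁻¹ ^ a * β⁻¹ ^ b * (u ^ a * v ^ b) := fun u v ↦ by
    rw [ENNReal.mul_rpow_of_nonneg _ _ ha.le, ENNReal.mul_rpow_of_nonneg _ _ hb.le,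
      mul_mul_mul_comm]
  have hnormalized := lintegral_add_le_of_iSup_eq_one ha hb hab (f := fun x ↦ α⁻¹ * f x)
    (g := fun x ↦ β⁻¹ * g x) (h := fun x ↦ α⁻¹ ^ a * β⁻¹ ^ b * h x)
    (hf.const_mul _) (hg.const_mul _) (hh.const_mul _)
    (by rw [← ENNReal.mul_iSup, ENNReal.inv_mul_cancel hα hf_sup])
    (by rw [← ENNReal.mul_iSup, ENNReal.inv_mul_cancel hβ hg_sup])
    (fun x y ↦ by rw [hmul]; gcongr; exact hfgh x y)
  rw [lintegral_const_mul _ hf, lintegral_const_mul _ hg, lintegral_const_mul _ hh] at hnormalized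
  refine (ENNReal.mul_le_mul_iff_right hc₀ hc_top).1 ?_
  rw [← hmul]
  exact (ennreal_rpow_mul_rpow_le_add ha hb hab _ _).trans hnormalized

theorem lintegral_eq_iSup_lintegral_min_natCast {α : Type*} [MeasurableSpace α] {μ : Measure α}
    {f : α → ℝ≥0∞} (hf : Measurable f) :
    ∫⁻ x, f x ∂μ = ⨆ k : ℕ, ∫⁻ x, min (f x) k ∂μ := by
  rw [← lintegral_iSup (fun k ↦ hf.min measurable_const)
    fun i j hij x ↦ min_le_min le_rfl (by exact_mod_cast hij)]
  refine lintegral_congr fun x ↦ ?_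
  rw [← inf_iSup_eq, ENNReal.iSup_natCast, inf_top_eq]

theorem prekopaLeindler_real (ha : 0 < a) (hb : 0 < b) (hab : a + b = 1)
    {f g h : ℝ → ℝ≥0∞} (hf : Measurable f) (hg : Measurable g) (hh : Measurable h)
    (hfgh : ∀ x y, f x ^ a * g y ^ b ≤ h (a • x + b • y)) :
    (∫⁻ x, f x) ^ a * (∫⁻ x, g x) ^ b ≤ ∫⁻ x, h x := by
  have hsup : ∀ (u : ℝ → ℝ≥0∞) (k : ℕ), ⨆ x, min (u x) k ≠ ∞ := fun u k ↦
    ((iSup_le fun x ↦ min_le_right _ _).trans_lt (ENNReal.natCast_lt_top k)).ne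
  have hrpow : ∀ {r : ℝ} (_ : 0 < r) (u : ℕ → ℝ≥0∞), (⨆ k, u k) ^ r = ⨆ k, u k ^ r :=
    fun hr u ↦ (ENNReal.orderIsoRpow _ hr).map_iSup u
  rw [lintegral_eq_iSup_lintegral_min_natCast hf, lintegral_eq_iSup_lintegral_min_natCast hg,
    hrpow ha, hrpow hb, ENNReal.iSup_mul]
  refine iSup_le fun i ↦ ?_
  rw [ENNReal.mul_iSup]
  refine iSup_le fun j ↦ ?_
  refine prekopaLeindler_real_of_bounded ha hb hab (hf.min measurable_const)
    (hg.min measurable_const) hh (hsup f i) (hsup g j) fun x y ↦ le_trans ?_ (hfgh x y)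
  gcongr <;> exact min_le_left _ _

theorem measurable_finCons (n : ℕ) :
    Measurable fun z : ℝ × (Fin n → ℝ) ↦ (Fin.cons z.1 z.2 : Fin (n + 1) → ℝ) := by
  simpa [MeasurableEquiv.piFinSuccAbove_symm_apply, Fin.insertNthEquiv] using
    (MeasurableEquiv.piFinSuccAbove (fun _ : Fin (n + 1) ↦ ℝ) 0).symm.measurable

theorem lintegral_finSucc {n : ℕ} {f : (Fin (n + 1) → ℝ) → ℝ≥0∞} (hf : Measurable f) :
    ∫⁻ x, f x = ∫⁻ t : ℝ, ∫⁻ z : Fin n → ℝ, f (Fin.cons t z) := by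
  have hpres := (volume_preserving_piFinSuccAbove (fun _ : Fin (n + 1) ↦ ℝ) 0).symm
  rw [← hpres.lintegral_comp hf, Measure.volume_eq_prod,
    lintegral_prod (fun z ↦ f _) (hf.comp hpres.measurable).aemeasurable]
  simp [MeasurableEquiv.piFinSuccAbove_symm_apply, Fin.insertNthEquiv]

theorem prekopaLeindler_fin (ha : 0 < a) (hb : 0 < b) (hab : a + b = 1) {n : ℕ}
    {f g h : (Fin n → ℝ) → ℝ≥0∞} (hf : Measurable f) (hg : Measurable g) (hh : Measurable h)
    (hfgh : ∀ x y, f x ^ a * g y ^ b ≤ h (a • x + b • y)) :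
    (∫⁻ x, f x) ^ a * (∫⁻ x, g x) ^ b ≤ ∫⁻ x, h x := by
  induction n with
  | zero =>
    have hpoint : ∀ u : (Fin 0 → ℝ) → ℝ≥0∞, ∫⁻ x, u x = u 0 := fun u ↦ by
      simpa [lintegral_unique, volume_pi] using congrArg u (Subsingleton.elim _ _)
    simpa only [hpoint, Subsingleton.elim (a • (0 : Fin 0 → ℝ) + b • 0) 0] using hfgh 0 0
  | succ n ih =>
    have hcons : ∀ {u : (Fin (n + 1) → ℝ) → ℝ≥0∞}, Measurable u → ∀ t : ℝ,
        Measurable fun z : Fin n → ℝ ↦ u (Fin.cons t z) := fun hu t ↦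
      (hu.comp (measurable_finCons n)).comp (measurable_const.prodMk measurable_id)
    have hfiber : ∀ {u : (Fin (n + 1) → ℝ) → ℝ≥0∞}, Measurable u →
        Measurable fun t : ℝ ↦ ∫⁻ z : Fin n → ℝ, u (Fin.cons t z) := fun hu ↦
      Measurable.lintegral_prod_right' (hu.comp (measurable_finCons n))
    rw [lintegral_finSucc hf, lintegral_finSucc hg, lintegral_finSucc hh]
    refine prekopaLeindler_real ha hb hab (hfiber hf) (hfiber hg) (hfiber hh) fun s t ↦ ?_
    refine ih (hcons hf s) (hcons hg t) (hcons hh _) fun x y ↦ ?_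
    refine (hfgh (Fin.cons s x) (Fin.cons t y)).trans_eq (congrArg h ?_)
    ext i
    refine Fin.cases ?_ (fun j ↦ ?_) i <;> simp

theorem prekopaLeindler (ha : 0 < a) (hb : 0 < b) (hab : a + b = 1) {n : ℕ}
    {f g h : EuclideanSpace ℝ (Fin n) → ℝ≥0∞}
    (hf : Measurable f) (hg : Measurable g) (hh : Measurable h)
    (hfgh : ∀ x y, f x ^ a * g y ^ b ≤ h (a • x + b • y)) :
    (∫⁻ x, f x) ^ a * (∫⁻ x, g x) ^ b ≤ ∫⁻ x, h x := by
  have hpres := PiLp.volume_preserving_toLp (Fin n)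
  rw [← hpres.lintegral_comp hf, ← hpres.lintegral_comp hg, ← hpres.lintegral_comp hh]
  exact prekopaLeindler_fin ha hb hab (hf.comp hpres.measurable) (hg.comp hpres.measurable)
    (hh.comp hpres.measurable) fun x y ↦ hfgh _ _

theorem integral_exp_mul_integral_exp_le_sq {n : ℕ} {u v w : EuclideanSpace ℝ (Fin n) → ℝ}
    (hu : Measurable u) (hv : Measurable v) (hw : Measurable w)
    (hu_int : Integrable fun x ↦ exp (u x)) (hv_int : Integrable fun x ↦ exp (v x))
    (hw_int : Integrable fun x ↦ exp (w x))
    (huvw : ∀ x y, u x + v y ≤ 2 * w (midpoint ℝ x y)) :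
    (∫ x, exp (u x)) * ∫ x, exp (v x) ≤ (∫ x, exp (w x)) ^ 2 := by
  have hPL := prekopaLeindler (f := fun x ↦ .ofReal (exp (u x))) (g := fun x ↦ .ofReal (exp (v x)))
    (h := fun x ↦ .ofReal (exp (w x))) one_half_pos one_half_pos (add_halves 1)
    hu.exp.ennreal_ofReal hv.exp.ennreal_ofReal hw.exp.ennreal_ofReal fun x y ↦ by
      rw [ENNReal.ofReal_rpow_of_pos (exp_pos _), ENNReal.ofReal_rpow_of_pos (exp_pos _),
        ← ENNReal.ofReal_mul (by positivity), ← exp_mul, ← exp_mul, ← exp_add, ← smul_add,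
        ← inv_eq_one_div, ← invOf_eq_inv (2 : ℝ), ← midpoint_eq_smul_add, invOf_eq_inv]
      refine ENNReal.ofReal_le_ofReal (exp_le_exp.2 ?_)
      linarith [huvw x y]
  have hnonneg : ∀ {φ : EuclideanSpace ℝ (Fin n) → ℝ}, 0 ≤ ∫ x, exp (φ x) :=
    integral_nonneg fun x ↦ (exp_pos _).le
  have hofReal : ∀ {φ : EuclideanSpace ℝ (Fin n) → ℝ}, Integrable (fun x ↦ exp (φ x)) →
      ∫⁻ x, .ofReal (exp (φ x)) = ENNReal.ofReal (∫ x, exp (φ x)) := fun hφ ↦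
    (ofReal_integral_eq_lintegral_ofReal hφ (.of_forall fun x ↦ (exp_pos _).le)).symm
  rw [hofReal hu_int, hofReal hv_int, hofReal hw_int,
    ENNReal.ofReal_rpow_of_nonneg hnonneg (by norm_num),
    ENNReal.ofReal_rpow_of_nonneg hnonneg (by norm_num), ← ENNReal.ofReal_mul (by positivity),
    ENNReal.ofReal_le_ofReal_iff hnonneg, ← sqrt_eq_rpow, ← sqrt_eq_rpow,
    ← sqrt_mul hnonneg, sqrt_le_left hnonneg] at hPL
  exact hPL

end PrekopaLeindler

/-- `f` is continuous and positively homogeneous of degree `k` away from the origin; nothing is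
required at the origin, where such functions may be singular. -/
structure PosHomogeneous {E F : Type*} [NormedAddCommGroup E] [NormedSpace ℝ E]
    [NormedAddCommGroup F] [NormedSpace ℝ F] (k : ℝ) (f : E → F) : Prop where
  continuousOn : ContinuousOn f {0}ᶜ
  map_smul : ∀ {x : E}, x ≠ 0 → ∀ {r : ℝ}, 0 < r → f (r • x) = r ^ k • f x

namespace PosHomogeneous

variable {E F G H : Type*} [NormedAddCommGroup E] [NormedSpace ℝ E]
  [NormedAddCommGroup F] [NormedSpace ℝ F] [NormedAddCommGroup G] [NormedSpace ℝ G]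
  [NormedAddCommGroup H] [NormedSpace ℝ H] {k l : ℝ} {f : E → F} {g : E → G} {φ ψ : E → ℝ}

theorem continuousAt (hf : PosHomogeneous k f) {x : E} (hx : x ≠ 0) : ContinuousAt f x :=
  hf.continuousOn.continuousAt (isOpen_compl_singleton.mem_nhds hx)

theorem const (c : F) : PosHomogeneous 0 fun _ : E ↦ c :=
  ⟨continuousOn_const, by simp⟩

theorem norm_self : PosHomogeneous 1 fun x : E ↦ ‖x‖ :=
  ⟨continuous_norm.continuousOn, fun _ _ hr ↦ by simp [norm_smul, abs_of_pos hr]⟩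

theorem clm (L : E →L[ℝ] F) : PosHomogeneous 1 fun x ↦ L x :=
  ⟨L.continuous.continuousOn, by simp⟩

theorem sub {f' : E → F} (hf : PosHomogeneous k f) (hf' : PosHomogeneous k f') :
    PosHomogeneous k fun x ↦ f x - f' x :=
  ⟨hf.continuousOn.sub hf'.continuousOn, fun hx _ hr ↦ by
    rw [hf.map_smul hx hr, hf'.map_smul hx hr, smul_sub]⟩

theorem add {f' : E → F} (hf : PosHomogeneous k f) (hf' : PosHomogeneous k f') :
    PosHomogeneous k fun x ↦ f x + f' x :=
  ⟨hf.continuousOn.add hf'.continuousOn, fun hx _ hr ↦ by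
    rw [hf.map_smul hx hr, hf'.map_smul hx hr, smul_add]⟩

theorem clm_comp (hf : PosHomogeneous k f) (L : F →L[ℝ] G) : PosHomogeneous k fun x ↦ L (f x) :=
  ⟨L.continuous.comp_continuousOn hf.continuousOn, fun hx _ hr ↦ by
    rw [hf.map_smul hx hr, L.map_smul]⟩

theorem bilin (hf : PosHomogeneous k f) (hg : PosHomogeneous l g) (B : F →L[ℝ] G →L[ℝ] H) :
    PosHomogeneous (k + l) fun x ↦ B (f x) (g x) :=
  ⟨(B.continuous.comp_continuousOn hf.continuousOn).clm_apply hg.continuousOn, fun hx _ hr ↦ by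
    simp only [hf.map_smul hx hr, hg.map_smul hx hr, _root_.map_smul,
      _root_.smul_apply, smul_smul, rpow_add hr, mul_comm]⟩

theorem smul (hφ : PosHomogeneous k φ) (hf : PosHomogeneous l f) :
    PosHomogeneous (k + l) fun x ↦ φ x • f x :=
  hφ.bilin hf (.lsmul ℝ ℝ)

theorem mul (hφ : PosHomogeneous k φ) (hψ : PosHomogeneous l ψ) :
    PosHomogeneous (k + l) fun x ↦ φ x * ψ x :=
  hφ.smul hψ

theorem clm_apply {L : E → F →L[ℝ] G} (hL : PosHomogeneous k L) (v : F) :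
    PosHomogeneous k fun x ↦ L x v :=
  hL.clm_comp (ContinuousLinearMap.apply ℝ G v)

theorem rpow_const (hφ : PosHomogeneous k φ) (hφ_pos : ∀ x ≠ 0, 0 < φ x) (p : ℝ) :
    PosHomogeneous (k * p) fun x ↦ φ x ^ p :=
  ⟨hφ.continuousOn.rpow_const fun x hx ↦ .inl (hφ_pos x hx).ne', fun {x} hx r hr ↦ by
    simp only [hφ.map_smul hx hr, smul_eq_mul,
      mul_rpow (rpow_nonneg hr.le _) (hφ_pos x hx).le, rpow_mul hr.le]⟩

theorem pow (hφ : PosHomogeneous k φ) (m : ℕ) : PosHomogeneous (k * m) fun x ↦ φ x ^ m :=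
  ⟨hφ.continuousOn.pow m, fun hx _ hr ↦ by
    simp only [hφ.map_smul hx hr, smul_eq_mul, mul_pow, rpow_mul hr.le, rpow_natCast]⟩

theorem norm_sq : PosHomogeneous 2 fun x : E ↦ ‖x‖ ^ 2 := by
  simpa using norm_self.pow (E := E) 2

theorem fderiv (hf : PosHomogeneous k f) (hf_diff : ContDiffOn ℝ 1 f {0}ᶜ) :
    PosHomogeneous (k - 1) (fderiv ℝ f) := by
  refine ⟨hf_diff.continuousOn_fderiv_of_isOpen isOpen_compl_singleton le_rfl, ?_⟩
  intro x hx r hr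
  have hdiff : ∀ {y : E}, y ≠ 0 → DifferentiableAt ℝ f y := fun hy ↦
    (hf_diff.contDiffAt (isOpen_compl_singleton.mem_nhds hy)).differentiableAt one_ne_zero
  have hscaled : HasFDerivAt (fun y ↦ f (r • y)) (r • _root_.fderiv ℝ f (r • x)) x := by
    refine ((hdiff (smul_ne_zero hr.ne' hx)).hasFDerivAt.comp x
      ((hasFDerivAt_id x).const_smul r)).congr_fderiv ?_
    ext v
    simp
  have hpow : HasFDerivAt (fun y ↦ f (r • y)) (r ^ k • _root_.fderiv ℝ f x) x := by
    refine ((hdiff hx).hasFDerivAt.const_smul (r ^ k)).congr_of_eventuallyEq ?_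
    filter_upwards [isOpen_compl_singleton.mem_nhds hx] with y hy using hf.map_smul hy hr
  rw [rpow_sub_one hr.ne', div_eq_inv_mul, mul_smul, ← hscaled.unique hpow, smul_smul,
    inv_mul_cancel₀ hr.ne', one_smul]

theorem eq_norm_rpow_smul (hf : PosHomogeneous k f) {x : E} (hx : x ≠ 0) :
    f x = ‖x‖ ^ k • f (‖x‖⁻¹ • x) := by
  have hx' : 0 < ‖x‖ := norm_pos_iff.2 hx
  rw [← hf.map_smul (smul_ne_zero (inv_ne_zero hx'.ne') hx) hx', smul_inv_smul₀ hx'.ne']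

theorem exists_norm_le [ProperSpace E] (hf : PosHomogeneous k f) :
    ∃ C, 0 ≤ C ∧ ∀ x ≠ 0, ‖f x‖ ≤ C * ‖x‖ ^ k := by
  obtain ⟨C, hC⟩ := (isCompact_sphere (0 : E) 1).exists_bound_of_continuousOn
    (hf.continuousOn.mono fun x hx ↦ ne_zero_of_mem_unit_sphere ⟨x, hx⟩)
  refine ⟨max C 0, le_max_right _ _, fun x hx ↦ ?_⟩
  have hsphere : ‖x‖⁻¹ • x ∈ sphere (0 : E) 1 := by
    simp [norm_smul, inv_mul_cancel₀ (norm_ne_zero_iff.2 hx)]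
  rw [hf.eq_norm_rpow_smul hx, norm_smul, norm_of_nonneg (by positivity), mul_comm]
  gcongr
  exact (hC _ hsphere).trans (le_max_left _ _)

theorem fderiv_apply_self (hf : PosHomogeneous k f) {x : E} (hx : x ≠ 0)
    (hdiff : DifferentiableAt ℝ f x) : _root_.fderiv ℝ f x x = k • f x := by
  have hray : HasDerivAt (fun r : ℝ ↦ r • x) x 1 := by
    simpa using (hasDerivAt_id (1 : ℝ)).smul_const x
  have hchain : HasDerivAt (fun r : ℝ ↦ f (r • x)) (_root_.fderiv ℝ f x x) 1 :=
    HasFDerivAt.comp_hasDerivAt_of_eq 1 hdiff.hasFDerivAt hray (one_smul ℝ x).symm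
  have hpow : HasDerivAt (fun r : ℝ ↦ r ^ k • f x) (k • f x) 1 := by
    simpa using (hasDerivAt_rpow_const (x := 1) (p := k) (.inl one_ne_zero)).smul_const (f x)
  refine hchain.unique (hpow.congr_of_eventuallyEq ?_)
  filter_upwards [lt_mem_nhds one_pos] with r hr using hf.map_smul hx hr

theorem continuous [ProperSpace E] (hf : PosHomogeneous k f) (hk : 0 < k)
    (hf_zero : f 0 = 0) : Continuous f := by
  refine continuous_iff_continuousAt.2 fun x ↦ ?_
  rcases eq_or_ne x 0 with rfl | hx
  · obtain ⟨C, -, hC⟩ := hf.exists_norm_le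
    rw [ContinuousAt, hf_zero]
    refine squeeze_zero_norm (a := fun x ↦ C * ‖x‖ ^ k) (fun x ↦ ?_) ?_
    · rcases eq_or_ne x 0 with rfl | hx
      exacts [by simp [hf_zero, zero_rpow hk.ne'], hC x hx]
    · simpa [zero_rpow hk.ne'] using
        ((continuous_norm.rpow_const fun _ ↦ .inr hk.le).const_mul C).tendsto (0 : E)
  · exact hf.continuousAt hx

theorem hasFDerivAt_zero [ProperSpace E] (hf : PosHomogeneous 2 f) (h0 : f 0 = 0) :
    HasFDerivAt f (0 : E →L[ℝ] F) 0 := by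
  obtain ⟨C, -, hC⟩ := hf.exists_norm_le
  refine .of_isLittleO ?_
  have hbig : f =O[𝓝 0] fun x ↦ ‖x‖ ^ 2 := by
    refine .of_bound C (.of_forall fun x ↦ ?_)
    rcases eq_or_ne x 0 with rfl | hx
    · simp [h0]
    · simpa using hC x hx
  simpa [h0] using hbig.trans_isLittleO (Asymptotics.isLittleO_norm_pow_id one_lt_two)

theorem exists_norm_sub_le [ProperSpace E] (hf : PosHomogeneous 1 f)
    (hf_zero : f 0 = 0) (hf_diff : ContDiffOn ℝ 1 f {0}ᶜ) :
    ∃ C, 0 ≤ C ∧ ∀ x y, ‖f x - f y‖ ≤ C * ‖x - y‖ := by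
  obtain ⟨A, hA_nonneg, hA⟩ := hf.exists_norm_le
  obtain ⟨B, -, hB⟩ := (hf.fderiv hf_diff).exists_norm_le
  simp only [rpow_one, sub_self, rpow_zero, mul_one] at hA hB
  have hA' : ∀ x, ‖f x‖ ≤ A * ‖x‖ := fun x ↦ by
    rcases eq_or_ne x 0 with rfl | hx
    exacts [by simp [hf_zero], hA x hx]
  refine ⟨max A B, le_max_of_le_left hA_nonneg, fun x y ↦ ?_⟩
  by_cases hseg : (0 : E) ∈ segment ℝ x y
  · have hnorm : ‖x‖ + ‖y‖ = ‖x - y‖ := by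
      simpa [dist_eq_norm] using dist_add_dist_of_mem_segment hseg
    calc ‖f x - f y‖ ≤ A * ‖x‖ + A * ‖y‖ := (norm_sub_le _ _).trans (add_le_add (hA' x) (hA' y))
      _ = A * ‖x - y‖ := by rw [← hnorm]; ring
      _ ≤ max A B * ‖x - y‖ := by gcongr; exact le_max_left A B
  · have hne : ∀ z ∈ segment ℝ x y, z ≠ 0 := fun z hz h ↦ hseg (h ▸ hz)
    refine (Convex.norm_image_sub_le_of_norm_hasFDerivWithin_le (fun z hz ↦
      ((hf_diff.differentiableOn one_ne_zero).differentiableAt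
        (isOpen_compl_singleton.mem_nhds (hne z hz))).hasFDerivAt.hasFDerivWithinAt)
      (fun z hz ↦ hB z (hne z hz)) (convex_segment x y) (right_mem_segment ℝ x y)
      (left_mem_segment ℝ x y)).trans ?_
    gcongr
    exact le_max_right A B

theorem measurable [MeasurableSpace E] [BorelSpace E] (hφ : PosHomogeneous k φ) : Measurable φ :=
  measurable_of_continuousOn_compl_singleton 0 hφ.continuousOn

variable {n : ℕ} {f : Eu n → F}

theorem continuous_sphere (hf : PosHomogeneous k f) : Continuous fun x : Sph n ↦ f x :=
  hf.continuousOn.comp_continuous continuous_subtype_val ne_zero_of_mem_unit_sphere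

end PosHomogeneous

section InnerRight

variable {E : Type*} [NormedAddCommGroup E] [InnerProductSpace ℝ E] (e : E)

theorem posHomogeneous_inner : PosHomogeneous 1 fun y ↦ ⟪e, y⟫_ℝ :=
  .clm (innerSL ℝ e)

theorem hasFDerivAt_inner_right (x : E) : HasFDerivAt (fun y ↦ ⟪e, y⟫_ℝ) (innerSL ℝ e) x :=
  (innerSL ℝ e).hasFDerivAt

end InnerRight

section Sphere

variable {n : ℕ} {F : Type*} [NormedAddCommGroup F]

instance sphMeas.instIsFiniteMeasure (n : ℕ) : IsFiniteMeasure (sphMeas n) :=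
  inferInstanceAs (IsFiniteMeasure (volume : Measure (Eu n)).toSphere)

instance sphMeas.instIsOpenPosMeasure (n : ℕ) : (sphMeas n).IsOpenPosMeasure :=
  inferInstanceAs (volume : Measure (Eu n)).toSphere.IsOpenPosMeasure

theorem integrable_sphMeas_of_continuous {f : Sph n → F} (hf : Continuous f) :
    Integrable f (sphMeas n) :=
  hf.integrable_of_hasCompactSupport (.of_compactSpace f)

theorem PosHomogeneous.integrable_sphMeas [NormedSpace ℝ F] {k : ℝ} {f : Eu n → F}
    (hf : PosHomogeneous k f) :
    Integrable (fun x : Sph n ↦ f x) (sphMeas n) :=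
  integrable_sphMeas_of_continuous hf.continuous_sphere

theorem integrable_iff_polar {f : Eu n → F} :
    Integrable f ↔ Integrable (fun z : Sph n × Set.Ioi (0 : ℝ) ↦ f ((z.2 : ℝ) • (z.1 : Eu n)))
      ((sphMeas n).prod (.volumeIoiPow n)) := by
  have hpolar := (volume : Measure (Eu n)).measurePreserving_homeomorphUnitSphereProd
  rw [finrank_euclideanSpace_fin, Nat.add_sub_cancel] at hpolar
  rw [← restrict_compl_singleton (μ := (volume : Measure (Eu n))) 0, ← IntegrableOn,
    integrableOn_iff_comap_subtypeVal (measurableSet_singleton _).compl, sphMeas,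
    ← hpolar.integrable_comp_emb (Homeomorph.measurableEmbedding _)]
  refine integrable_congr (.of_forall fun x ↦ ?_)
  simp [smul_inv_smul₀ (norm_ne_zero_iff.2 x.2)]

theorem integral_polar [NormedSpace ℝ F] (f : Eu n → F) :
    ∫ x, f x = ∫ z : Sph n × Set.Ioi (0 : ℝ), f ((z.2 : ℝ) • (z.1 : Eu n))
      ∂(sphMeas n).prod (.volumeIoiPow n) := by
  have hpolar := (volume : Measure (Eu n)).measurePreserving_homeomorphUnitSphereProd
  rw [finrank_euclideanSpace_fin, Nat.add_sub_cancel] at hpolar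
  rw [← restrict_compl_singleton (μ := (volume : Measure (Eu n))) 0,
    ← integral_subtype_comap (measurableSet_singleton _).compl, sphMeas,
    ← hpolar.integral_comp (Homeomorph.measurableEmbedding _)]
  refine integral_congr_ae (.of_forall fun x ↦ ?_)
  simp [smul_inv_smul₀ (norm_ne_zero_iff.2 x.2)]

theorem integrable_volumeIoiPow_iff {g : ℝ → ℝ} :
    Integrable (fun r : Set.Ioi (0 : ℝ) ↦ g r) (.volumeIoiPow n) ↔
      IntegrableOn (fun r ↦ r ^ n * g r) (Set.Ioi 0) := by
  rw [Measure.volumeIoiPow, integrable_withDensity_iff_integrable_smul' (by fun_prop) (by simp),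
    integrableOn_iff_comap_subtypeVal measurableSet_Ioi]
  refine integrable_congr (.of_forall fun r ↦ ?_)
  simp [ENNReal.toReal_ofReal (pow_nonneg (le_of_lt r.2) n)]

theorem integral_volumeIoiPow (g : ℝ → ℝ) :
    ∫ r : Set.Ioi (0 : ℝ), g r ∂(.volumeIoiPow n) = ∫ r in Set.Ioi 0, r ^ n * g r := by
  rw [Measure.volumeIoiPow, integral_withDensity_eq_integral_toReal_smul (by fun_prop) (by simp),
    ← integral_subtype_comap measurableSet_Ioi]
  refine integral_congr_ae (.of_forall fun r ↦ ?_)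
  simp [ENNReal.toReal_ofReal (pow_nonneg (le_of_lt r.2) n)]

end Sphere

section GaussianMoments

/-- The moment `∫₀^∞ ρ^s exp(-ρ²/2) dρ` of the Gaussian weight, by which a Gaussian integral over
`ℝ^{n+1}` of a homogeneous function differs from its integral over the sphere. -/
def gaussMoment (s : ℝ) : ℝ := ∫ ρ in Set.Ioi (0 : ℝ), ρ ^ s * exp (-ρ ^ 2 / 2)

variable {s : ℝ}

theorem gaussMoment_eq_Gamma (hs : -1 < s) :
    gaussMoment s = (1 / 2 : ℝ) ^ (-(s + 1) / 2) * (1 / 2) * Gamma ((s + 1) / 2) := by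
  rw [← integral_rpow_mul_exp_neg_mul_rpow two_pos hs one_half_pos, gaussMoment]
  refine setIntegral_congr_fun measurableSet_Ioi fun ρ _ ↦ ?_
  simp only [rpow_two]
  ring_nf

theorem gaussMoment_pos (hs : -1 < s) : 0 < gaussMoment s := by
  rw [gaussMoment_eq_Gamma hs]
  have := Gamma_pos_of_pos (show 0 < (s + 1) / 2 by linarith)
  positivity

theorem gaussMoment_add_two (hs : -1 < s) : gaussMoment (s + 2) = (s + 1) * gaussMoment s := by
  rw [gaussMoment_eq_Gamma hs, gaussMoment_eq_Gamma (by linarith),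
    show (s + 2 + 1) / 2 = (s + 1) / 2 + 1 by ring, Gamma_add_one (by linarith),
    show -(s + 2 + 1) / 2 = -(s + 1) / 2 - 1 by ring, rpow_sub_one (by norm_num)]
  ring

variable {N : ℝ}

theorem integrableOn_rpow_mul_exp_neg_mul_sq_div_two (hs : -1 < s) (hN : 0 < N) :
    IntegrableOn (fun ρ ↦ ρ ^ s * exp (-(ρ * N) ^ 2 / 2)) (Set.Ioi 0) := by
  convert! integrableOn_rpow_mul_exp_neg_mul_sq (b := N ^ 2 / 2) (by positivity) hs using 4
  ring

theorem integral_rpow_mul_exp_neg_mul_sq_div_two (hN : 0 < N) :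
    ∫ ρ in Set.Ioi (0 : ℝ), ρ ^ s * exp (-(ρ * N) ^ 2 / 2) = gaussMoment s * N ^ (-(s + 1)) := by
  have hscale := integral_comp_mul_right_Ioi (fun ρ ↦ ρ ^ s * exp (-ρ ^ 2 / 2)) 0 hN
  rw [zero_mul, smul_eq_mul, ← gaussMoment] at hscale
  rw [neg_add, rpow_add hN, rpow_neg_one, mul_comm, mul_assoc, ← hscale, ← integral_const_mul]
  refine setIntegral_congr_fun measurableSet_Ioi fun ρ hρ ↦ ?_
  simp only [mul_rpow (le_of_lt hρ) hN.le, rpow_neg hN.le]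
  field_simp [(rpow_pos_of_pos hN s).ne']

end GaussianMoments

section GaussianPolar

variable {n : ℕ} {k : ℝ} {N φ : Eu n → ℝ}

theorem pow_mul_exp_neg_sq_mul_polar (hN : PosHomogeneous 1 N) (hφ : PosHomogeneous k φ)
    (x : Sph n) {r : ℝ} (hr : 0 < r) :
    r ^ n * (exp (-N (r • (x : Eu n)) ^ 2 / 2) * φ (r • (x : Eu n))) =
      φ x * (r ^ (n + k) * exp (-(r * N x) ^ 2 / 2)) := by
  have hx := ne_zero_of_mem_unit_sphere x
  rw [hN.map_smul hx hr, hφ.map_smul hx hr, rpow_add hr, rpow_natCast, rpow_one, smul_eq_mul,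
    smul_eq_mul]
  ring

theorem integrable_exp_neg_sq_mul (hN : PosHomogeneous 1 N) (hN_pos : ∀ x ≠ 0, 0 < N x)
    (hφ : PosHomogeneous k φ) (hk : -1 < n + k) :
    Integrable fun x ↦ exp (-N x ^ 2 / 2) * φ x := by
  have hmeas : Measurable fun x ↦ exp (-N x ^ 2 / 2) * φ x :=
    (((hN.measurable.pow_const 2).neg.div_const 2).exp).mul hφ.measurable
  rw [integrable_iff_polar,
    integrable_prod_iff (hmeas.fun_comp (by fun_prop)).aestronglyMeasurable]
  have hN_sphere : ∀ x : Sph n, 0 < N x := fun x ↦ hN_pos x (ne_zero_of_mem_unit_sphere x)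
  constructor
  · refine .of_forall fun x ↦ ?_
    simp only
    rw [integrable_volumeIoiPow_iff (g := fun r ↦ exp (-N (r • (x : Eu n)) ^ 2 / 2) * φ (r • x)),
      integrableOn_congr_fun (fun r (hr : r ∈ Set.Ioi 0) ↦
        pow_mul_exp_neg_sq_mul_polar hN hφ x hr) measurableSet_Ioi]
    exact (integrableOn_rpow_mul_exp_neg_mul_sq_div_two hk (hN_sphere x)).const_mul _
  · have hfiber : ∀ x : Sph n, (∫ r : Set.Ioi (0 : ℝ), ‖exp (-N ((r : ℝ) • (x : Eu n)) ^ 2 / 2) *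
        φ ((r : ℝ) • (x : Eu n))‖ ∂(.volumeIoiPow n)) =
        |φ x| * (gaussMoment (n + k) * N x ^ (-(n + k + 1))) := fun x ↦ by
      rw [integral_volumeIoiPow fun r ↦ ‖exp (-N (r • (x : Eu n)) ^ 2 / 2) * φ (r • (x : Eu n))‖,
        ← integral_rpow_mul_exp_neg_mul_sq_div_two (hN_sphere x), ← integral_const_mul]
      refine setIntegral_congr_fun measurableSet_Ioi fun r (hr : 0 < r) ↦ ?_
      have hpolar := congrArg (|·|) (pow_mul_exp_neg_sq_mul_polar hN hφ x hr)
      simpa only [abs_mul, norm_eq_abs, abs_pow, abs_rpow_of_nonneg hr.le, abs_of_pos hr, abs_exp]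
        using hpolar
    simp only [hfiber]
    exact integrable_sphMeas_of_continuous (hφ.continuous_sphere.abs.mul
      (continuous_const.mul (hN.rpow_const hN_pos _).continuous_sphere))

theorem integral_exp_neg_sq_mul (hN : PosHomogeneous 1 N) (hN_pos : ∀ x ≠ 0, 0 < N x)
    (hφ : PosHomogeneous k φ) (hk : -1 < n + k) :
    ∫ x, exp (-N x ^ 2 / 2) * φ x =
      gaussMoment (n + k) * ∫ x : Sph n, N x ^ (-(n + k + 1)) * φ x ∂sphMeas n := by
  rw [integral_polar, integral_prod _
    (integrable_iff_polar.1 (integrable_exp_neg_sq_mul hN hN_pos hφ hk)), ← integral_const_mul]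
  refine integral_congr_ae (.of_forall fun x ↦ ?_)
  simp only
  rw [integral_volumeIoiPow fun r ↦ exp (-N (r • (x : Eu n)) ^ 2 / 2) * φ (r • (x : Eu n)),
    setIntegral_congr_fun measurableSet_Ioi fun r (hr : 0 < r) ↦
      pow_mul_exp_neg_sq_mul_polar hN hφ x hr, integral_const_mul,
    integral_rpow_mul_exp_neg_mul_sq_div_two (hN_pos x (ne_zero_of_mem_unit_sphere x))]
  ring

end GaussianPolar

section SphereDivergence

variable {n : ℕ} {k : ℝ} {g : Eu n → ℝ}

theorem hasFDerivAt_exp_neg_norm_sq_div_two {E : Type*} [NormedAddCommGroup E]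
    [InnerProductSpace ℝ E] (x : E) :
    HasFDerivAt (fun y : E ↦ exp (-‖y‖ ^ 2 / 2)) (-exp (-‖x‖ ^ 2 / 2) • innerSL ℝ x) x := by
  refine (((hasStrictFDerivAt_norm_sq x).hasFDerivAt.fun_neg.mul_const 2⁻¹).exp).congr_fderiv ?_
  ext w
  simp [mul_comm, div_eq_mul_inv]

theorem integral_fderiv_apply_sphMeas_of_degree_two (hg : PosHomogeneous 2 g)
    (hg_diff : ContDiffOn ℝ 1 g {0}ᶜ) (h0 : g 0 = 0) (v : Eu n) :
    ∫ x : Sph n, fderiv ℝ g x v ∂sphMeas n =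
      (n + 2) * ∫ x : Sph n, ⟪(x : Eu n), v⟫_ℝ * g x ∂sphMeas n := by
  have hn : (-1 : ℝ) < n := by linarith [n.cast_nonneg (α := ℝ)]
  have hnorm_pos : ∀ x : Eu n, x ≠ 0 → 0 < ‖x‖ := fun x ↦ norm_pos_iff.2
  have hdiff : Differentiable ℝ g := fun x ↦ by
    rcases eq_or_ne x 0 with rfl | hx
    · exact (hg.hasFDerivAt_zero h0).differentiableAt
    · exact (hg_diff.contDiffAt (isOpen_compl_singleton.mem_nhds hx)).differentiableAt one_ne_zero
  have hexp := hasFDerivAt_exp_neg_norm_sq_div_two (E := Eu n)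
  have hderiv : PosHomogeneous 1 fun x ↦ fderiv ℝ g x v := by
    have := (hg.fderiv hg_diff).clm_apply v
    norm_num at this
    exact this
  have hinner : PosHomogeneous 3 fun x ↦ ⟪x, v⟫_ℝ * g x := by
    have := (PosHomogeneous.clm (innerSL ℝ v)).mul hg
    norm_num [real_inner_comm] at this
    simpa only [real_inner_comm] using this
  have hint := fun {l : ℝ} {φ : Eu n → ℝ} (hφ : PosHomogeneous l φ) (hl : 0 ≤ l) ↦
    integrable_exp_neg_sq_mul .norm_self hnorm_pos hφ (by linarith)
  have hpolar := fun {l : ℝ} {φ : Eu n → ℝ} (hφ : PosHomogeneous l φ) (hl : 0 ≤ l) ↦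
    integral_exp_neg_sq_mul .norm_self hnorm_pos hφ (by linarith)
  have hparts : ∫ x : Eu n, exp (-‖x‖ ^ 2 / 2) * fderiv ℝ g x v =
      ∫ x : Eu n, exp (-‖x‖ ^ 2 / 2) * (⟪x, v⟫_ℝ * g x) := by
    rw [integral_mul_fderiv_eq_neg_fderiv_mul_of_integrable (v := v) _
      (hint hderiv zero_le_one) (hint hg zero_le_two) (fun x _ ↦ (hexp x).differentiableAt)
      fun x _ ↦ hdiff x, ← integral_neg]
    · simp [(hexp _).fderiv, mul_assoc]
    · simpa [(hexp _).fderiv, mul_assoc] using (hint hinner (by norm_num)).neg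
  rw [hpolar hderiv zero_le_one, hpolar hinner (by norm_num),
    show (n + 3 : ℝ) = n + 1 + 2 by ring, gaussMoment_add_two (by linarith [hn])] at hparts
  refine mul_left_cancel₀ (gaussMoment_pos (s := n + 1) (by linarith)).ne' ?_
  simp only [norm_eq_of_mem_sphere, one_rpow, one_mul] at hparts
  rw [hparts]
  ring

theorem integral_fderiv_apply_sphMeas (hg : PosHomogeneous k g) (hg_diff : ContDiffOn ℝ 1 g {0}ᶜ)
    (v : Eu n) :
    ∫ x : Sph n, fderiv ℝ g x v ∂sphMeas n =
      (n + k) * ∫ x : Sph n, ⟪(x : Eu n), v⟫_ℝ * g x ∂sphMeas n := by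
  let f : Eu n → ℝ := fun y ↦ ‖y‖ ^ 2 * ((‖y‖ ^ 2) ^ (-k / 2) * g y)
  have hsq_pos : ∀ y : Eu n, y ≠ 0 → 0 < ‖y‖ ^ 2 := fun y hy ↦ pow_pos (norm_pos_iff.2 hy) 2
  have hf : PosHomogeneous 2 f := by
    have := PosHomogeneous.norm_sq.mul ((PosHomogeneous.norm_sq.rpow_const hsq_pos (-k / 2)).mul hg)
    rwa [show 2 + (2 * (-k / 2) + k) = 2 by ring] at this
  have hf_diff : ContDiffOn ℝ 1 f {0}ᶜ :=
    (contDiff_norm_sq ℝ).contDiffOn.mul (((contDiff_norm_sq ℝ).contDiffOn.rpow_const_of_ne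
      fun y hy ↦ (hsq_pos y hy).ne').mul hg_diff)
  have hfderiv : ∀ x : Sph n, fderiv ℝ f x v =
      fderiv ℝ g x v + (2 - k) * (⟪(x : Eu n), v⟫_ℝ * g x) := by
    intro x
    have hx : ‖(x : Eu n)‖ = 1 := norm_eq_of_mem_sphere x
    have hsq' := (hasStrictFDerivAt_norm_sq (x : Eu n)).hasFDerivAt
    have hg' := ((hg_diff.contDiffAt (isOpen_compl_singleton.mem_nhds
      (ne_zero_of_mem_unit_sphere x))).differentiableAt one_ne_zero).hasFDerivAt
    rw [(hsq'.fun_mul ((hsq'.rpow_const (p := -k / 2) (.inl (by simp [hx]))).fun_mul hg')).fderiv]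
    simp [hx]
    ring
  have hf_sphere : ∀ x : Sph n, f x = g x := fun x ↦ by simp [f]
  have hdiv := integral_fderiv_apply_sphMeas_of_degree_two hf hf_diff (by simp [f]) v
  simp only [hfderiv, hf_sphere] at hdiv
  rw [integral_add, integral_const_mul] at hdiv
  · linarith
  · exact ((hg.fderiv hg_diff).clm_apply v).integrable_sphMeas
  · exact (integrable_sphMeas_of_continuous
      ((continuous_subtype_val.inner continuous_const).mul hg.continuous_sphere)).const_mul _

end SphereDivergence

section SupportFunction

variable {n : ℕ} {K : Set (Eu n)}

theorem exists_mem_sfn_eq_inner (hK : IsCompact K) (hne : K.Nonempty) (z : Eu n) :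
    ∃ y ∈ K, sfn K z = ⟪z, y⟫_ℝ :=
  hK.exists_sSup_image_eq hne (by fun_prop)

theorem inner_le_sfn (hK : IsCompact K) {y : Eu n} (hy : y ∈ K) (z : Eu n) :
    ⟪z, y⟫_ℝ ≤ sfn K z :=
  le_csSup (hK.bddAbove_image (by fun_prop)) ⟨y, hy, rfl⟩

theorem sfn_smul (hK : IsCompact K) (hne : K.Nonempty) {r : ℝ} (hr : 0 ≤ r) (z : Eu n) :
    sfn K (r • z) = r * sfn K z := by
  obtain ⟨y, hy, hzy⟩ := exists_mem_sfn_eq_inner hK hne z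
  obtain ⟨y', hy', hzy'⟩ := exists_mem_sfn_eq_inner hK hne (r • z)
  refine le_antisymm ?_ ?_
  · rw [hzy', real_inner_smul_left]
    exact mul_le_mul_of_nonneg_left (inner_le_sfn hK hy' z) hr
  · rw [hzy, ← real_inner_smul_left]
    exact inner_le_sfn hK hy _

end SupportFunction

namespace IsSmoothConvexBody

variable {n : ℕ} {K : Set (Eu n)} (hK : IsSmoothConvexBody K) {y z : Eu n}

include hK

theorem nonempty : K.Nonempty :=
  hK.interior_nonempty.mono interior_subset

theorem sfn_pos (hz : z ≠ 0) : 0 < sfn K z := by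
  have hsphere : ‖z‖⁻¹ • z ∈ sphere (0 : Eu n) 1 := by
    simp [norm_smul, norm_ne_zero_iff.2 hz]
  rw [← smul_inv_smul₀ (norm_ne_zero_iff.2 hz) z,
    sfn_smul hK.compact hK.nonempty (norm_nonneg _)]
  exact mul_pos (norm_pos_iff.2 hz) (hK.pos ⟨_, hsphere⟩)

theorem sfn_zero : sfn K (0 : Eu n) = 0 := by
  simpa using sfn_smul hK.compact hK.nonempty le_rfl (0 : Eu n)

theorem sfn_nonneg (z : Eu n) : 0 ≤ sfn K z := by
  rcases eq_or_ne z 0 with rfl | hz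
  exacts [hK.sfn_zero.ge, (hK.sfn_pos hz).le]

theorem contDiffAt_sfn (hz : z ≠ 0) : ContDiffAt ℝ (⊤ : ℕ∞) (sfn K) z :=
  hK.smooth.contDiffAt (isOpen_compl_singleton.mem_nhds hz)

theorem hasFDerivAt_sfn (hz : z ≠ 0) :
    HasFDerivAt (sfn K) (innerSL ℝ (gradient (sfn K) z)) z :=
  ((hK.contDiffAt_sfn hz).differentiableAt (by simp)).hasGradientAt.hasFDerivAt

theorem posHomogeneous_sfn : PosHomogeneous 1 (sfn K) :=
  ⟨hK.smooth.continuousOn, fun _ _ hr ↦ by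
    rw [rpow_one, smul_eq_mul, sfn_smul hK.compact hK.nonempty hr.le]⟩

theorem contDiffAt_gradient (hz : z ≠ 0) : ContDiffAt ℝ (⊤ : ℕ∞) (gradient (sfn K)) z :=
  (InnerProductSpace.toDual ℝ (Eu n)).symm.contDiff.contDiffAt.comp z
    ((hK.contDiffAt_sfn hz).fderiv_right (by norm_cast))

theorem hasFDerivAt_gradient (hz : z ≠ 0) : HasFDerivAt (gradient (sfn K)) (hessA K z) z :=
  ((hK.contDiffAt_gradient hz).differentiableAt (by simp)).hasFDerivAt

theorem posHomogeneous_gradient : PosHomogeneous 0 (gradient (sfn K)) :=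
  ⟨fun _ hz ↦ (hK.contDiffAt_gradient hz).continuousAt.continuousWithinAt, fun hz r hr ↦ by
    have hfderiv := hK.posHomogeneous_sfn.fderiv (hK.smooth.of_le (by norm_cast))
    rw [sub_self] at hfderiv
    rw [gradient, hfderiv.map_smul hz hr, rpow_zero, one_smul, one_smul, gradient]⟩

theorem posHomogeneous_hessA : PosHomogeneous (-1) (hessA K) := by
  simpa only [zero_sub] using! hK.posHomogeneous_gradient.fderiv
    fun z hz ↦ ((hK.contDiffAt_gradient hz).of_le (by norm_cast)).contDiffWithinAt

theorem inner_gradient_self (hz : z ≠ 0) : ⟪gradient (sfn K) z, z⟫_ℝ = sfn K z := by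
  rw [inner_gradient_left, hK.posHomogeneous_sfn.fderiv_apply_self hz
    (hK.hasFDerivAt_sfn hz).differentiableAt, one_smul]

theorem gradient_mem (hz : z ≠ 0) : gradient (sfn K) z ∈ K := by
  obtain ⟨k, hk, hzk⟩ := exists_mem_sfn_eq_inner hK.compact hK.nonempty z
  have hmin : IsLocalMin (fun w ↦ sfn K w - innerSL ℝ k w) z := .of_forall fun w ↦ by
    simp only [innerSL_apply_apply, real_inner_comm _ k, ← hzk, sub_self, sub_nonneg]
    exact inner_le_sfn hK.compact hk w
  have hcrit := hmin.hasFDerivAt_eq_zero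
    ((hK.hasFDerivAt_sfn hz).fun_sub (innerSL ℝ k).hasFDerivAt)
  rwa [(InnerProductSpace.toDual ℝ (Eu n)).injective (sub_eq_zero.1 hcrit)]

theorem inner_gradient_le (hy : y ≠ 0) (z : Eu n) : ⟪gradient (sfn K) y, z⟫_ℝ ≤ sfn K z := by
  rw [real_inner_comm]
  exact inner_le_sfn hK.compact (hK.gradient_mem hy) z

theorem hessA_apply_self (hz : z ≠ 0) : hessA K z z = 0 := by
  rw [hessA, hK.posHomogeneous_gradient.fderiv_apply_self hz
    (hK.hasFDerivAt_gradient hz).differentiableAt, zero_smul]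

theorem hasFDerivAt_inner_gradient (hz : z ≠ 0) (v : Eu n) :
    HasFDerivAt (fun y ↦ ⟪gradient (sfn K) y, v⟫_ℝ) (innerSL ℝ v ∘L hessA K z) z := by
  simpa only [Function.comp_def, innerSL_apply_apply, real_inner_comm] using
    (innerSL ℝ v).hasFDerivAt.comp z (hK.hasFDerivAt_gradient hz)

theorem inner_hessA_comm (hz : z ≠ 0) (v w : Eu n) :
    ⟪hessA K z v, w⟫_ℝ = ⟪hessA K z w, v⟫_ℝ := by
  have hsymm : IsSymmSndFDerivAt ℝ (sfn K) z := (hK.contDiffAt_sfn hz).isSymmSndFDerivAt (by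
    rw [minSmoothness_of_isRCLikeNormedField]
    exact WithTop.coe_le_coe.2 (le_top : (2 : ℕ∞) ≤ ⊤))
  have hdiff : DifferentiableAt ℝ (fderiv ℝ (sfn K)) z :=
    ((hK.contDiffAt_sfn hz).fderiv_right (m := (⊤ : ℕ∞)) (by norm_cast)).differentiableAt (by simp)
  have hsnd : ∀ v w, ⟪hessA K z v, w⟫_ℝ = fderiv ℝ (fderiv ℝ (sfn K)) z v w := fun v w ↦ by
    have hflip : HasFDerivAt (fun y ↦ ⟪gradient (sfn K) y, w⟫_ℝ)
        ((fderiv ℝ (fderiv ℝ (sfn K)) z).flip w) z := by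
      simpa only [inner_gradient_left, ContinuousLinearMap.comp_zero, zero_add] using!
        hdiff.hasFDerivAt.clm_apply (hasFDerivAt_const w z)
    simpa [real_inner_comm] using
      DFunLike.congr_fun ((hK.hasFDerivAt_inner_gradient hz w).unique hflip) v
  rw [hsnd, hsnd, hsymm v w]

theorem inner_hessA_pos (hz : z ≠ 0) {v : Eu n} (hv : v ∉ Submodule.span ℝ {z}) :
    0 < ⟪hessA K z v, v⟫_ℝ := by
  have hnorm : 0 < ‖z‖ := norm_pos_iff.2 hz
  obtain ⟨x, hx⟩ : ∃ x : Sph n, (x : Eu n) = ‖z‖⁻¹ • z :=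
    ⟨⟨‖z‖⁻¹ • z, by simp [norm_smul, hnorm.ne']⟩, rfl⟩
  have hx0 := ne_zero_of_mem_unit_sphere x
  have hxx : ⟪(x : Eu n), x⟫_ℝ = 1 := by simp
  have hu : v - ⟪(x : Eu n), v⟫_ℝ • (x : Eu n) ≠ 0 := fun h ↦ hv <| by
    rw [sub_eq_zero.1 h, hx]
    exact Submodule.smul_mem _ _ (Submodule.smul_mem _ _ (Submodule.mem_span_singleton_self z))
  have hxA : ⟪hessA K x v, x⟫_ℝ = 0 := by
    rw [hK.inner_hessA_comm hx0, hK.hessA_apply_self hx0, inner_zero_left]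
  have hpos : 0 < ⟪hessA K x v, v⟫_ℝ := by
    simpa [tens, inner_sub_right, real_inner_smul_right, hxx, hxA, hK.hessA_apply_self hx0]
      using hK.posdef x _ hu
  rw [hK.posHomogeneous_hessA.eq_norm_rpow_smul hz, ← hx, smul_apply, real_inner_smul_left]
  positivity

theorem rK_nonneg (x : Sph n) : 0 ≤ rK K (x : Eu n) := by
  have hpos : ((hessA K x + tens (x : Eu n) : Eu n →L[ℝ] Eu n) : Eu n →ₗ[ℝ] Eu n).IsPositive := by
    refine ⟨fun v w ↦ ?_, fun v ↦ ?_⟩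
    · have hsymm := hK.inner_hessA_comm (ne_zero_of_mem_unit_sphere x) v w
      simp only [tens, ContinuousLinearMap.coe_coe, add_apply, inner_add_left, inner_add_right,
        ContinuousLinearMap.smulRight_apply, innerSL_apply_apply, real_inner_smul_left,
        real_inner_smul_right, hsymm, real_inner_comm v]
      ring
    · rcases eq_or_ne v 0 with rfl | hv
      · simp
      · exact (hK.posdef x v hv).le
  let b := EuclideanSpace.basisFun (Fin (n + 1)) ℝ
  rw [rK, ← LinearMap.det_toMatrix b.toBasis]
  exact ((LinearMap.posSemidef_toMatrix_iff b).2 hpos).det_nonneg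

theorem dens_nonneg (x : Sph n) : 0 ≤ dens K (x : Eu n) :=
  mul_nonneg (hK.pos x).le (hK.rK_nonneg x)

end IsSmoothConvexBody

section DualityMap

variable {n : ℕ} {K : Set (Eu n)}

/-- The gradient of `h²/2`, where `h` is the support function of `K`. It is a bijection of
`ℝ^{n+1}`, inverse to the gradient of the convex conjugate of `h²/2`. -/
def dualityMap (K : Set (Eu n)) (y : Eu n) : Eu n := sfn K y • gradient (sfn K) y

/-- The derivative `h A + ∇h ⊗ ∇h` of `dualityMap K` away from the origin. -/
def dualityDeriv (K : Set (Eu n)) (y : Eu n) : Eu n →L[ℝ] Eu n :=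
  sfn K y • hessA K y + tens (gradient (sfn K) y)

theorem inner_dualityDeriv_apply (y v w : Eu n) :
    ⟪dualityDeriv K y v, w⟫_ℝ = sfn K y * ⟪hessA K y v, w⟫_ℝ +
      ⟪gradient (sfn K) y, v⟫_ℝ * ⟪gradient (sfn K) y, w⟫_ℝ := by
  simp only [dualityDeriv, tens, add_apply, smul_apply, ContinuousLinearMap.smulRight_apply,
    innerSL_apply_apply, inner_add_left, real_inner_smul_left]

end DualityMap

namespace IsSmoothConvexBody

variable {n : ℕ} {K : Set (Eu n)} (hK : IsSmoothConvexBody K) {y z : Eu n}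

include hK

theorem dualityMap_zero : dualityMap K 0 = 0 := by
  rw [dualityMap, hK.sfn_zero, zero_smul]

theorem posHomogeneous_dualityMap : PosHomogeneous 1 (dualityMap K) := by
  simpa only [add_zero] using! hK.posHomogeneous_sfn.smul hK.posHomogeneous_gradient

theorem hasFDerivAt_dualityMap (hz : z ≠ 0) : HasFDerivAt (dualityMap K) (dualityDeriv K z) z :=
  (hK.hasFDerivAt_sfn hz).smul (hK.hasFDerivAt_gradient hz)

theorem inner_dualityMap_self (y : Eu n) : ⟪dualityMap K y, y⟫_ℝ = sfn K y ^ 2 := by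
  rcases eq_or_ne y 0 with rfl | hy
  · simp [hK.sfn_zero]
  · rw [dualityMap, real_inner_smul_left, hK.inner_gradient_self hy, sq]

theorem inner_dualityMap_le (y z : Eu n) : ⟪dualityMap K y, z⟫_ℝ ≤ sfn K y * sfn K z := by
  rcases eq_or_ne y 0 with rfl | hy
  · simp [hK.dualityMap_zero, hK.sfn_zero]
  · rw [dualityMap, real_inner_smul_left]
    exact mul_le_mul_of_nonneg_left (hK.inner_gradient_le hy z) (hK.sfn_nonneg y)

theorem sfn_sq_div_two_add_inner_le (y z : Eu n) :
    sfn K y ^ 2 / 2 + ⟪dualityMap K y, z - y⟫_ℝ ≤ sfn K z ^ 2 / 2 := by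
  have hle := hK.inner_dualityMap_le y z
  rw [inner_sub_right, hK.inner_dualityMap_self]
  nlinarith [sq_nonneg (sfn K y - sfn K z)]

theorem inner_dualityDeriv_pos (hz : z ≠ 0) {v : Eu n} (hv : v ≠ 0) :
    0 < ⟪dualityDeriv K z v, v⟫_ℝ := by
  rw [inner_dualityDeriv_apply]
  by_cases hspan : v ∈ Submodule.span ℝ {z}
  · obtain ⟨a, rfl⟩ := Submodule.mem_span_singleton.1 hspan
    have ha : a ≠ 0 := left_ne_zero_of_smul hv
    have hpos := hK.sfn_pos hz
    simp only [map_smul, hK.hessA_apply_self hz, real_inner_smul_right,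
      hK.inner_gradient_self hz, smul_zero, inner_zero_left, mul_zero, zero_add]
    exact mul_self_pos.2 (mul_ne_zero ha hpos.ne')
  · exact add_pos_of_pos_of_nonneg (mul_pos (hK.sfn_pos hz) (hK.inner_hessA_pos hz hspan))
      (mul_self_nonneg _)

theorem dualityMap_injective : Function.Injective (dualityMap K) := by
  intro y z hyz
  by_contra hne
  have hsfn : sfn K y = sfn K z := by
    have hy := hyz ▸ hK.inner_dualityMap_self y
    have hz := hyz ▸ hK.inner_dualityMap_self z
    nlinarith [hK.inner_dualityMap_le z y, hK.inner_dualityMap_le y z]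
  have hpos : 0 < sfn K z := by
    rcases eq_or_ne z 0 with rfl | hz
    exacts [hsfn ▸ hK.sfn_pos hne, hK.sfn_pos hz]
  have hline : ∀ t : ℝ, HasDerivAt (fun t : ℝ ↦ z + t • (y - z)) (y - z) t := fun t ↦ by
    simpa using ((hasDerivAt_id t).smul_const (y - z)).const_add z
  have hline_ne : ∀ t : ℝ, z + t • (y - z) ≠ 0 := fun t h ↦ by
    have hinner := congr(⟪dualityMap K z, $h⟫_ℝ)
    rw [inner_add_right, real_inner_smul_right, inner_sub_right, hK.inner_dualityMap_self, ← hyz,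
      hK.inner_dualityMap_self, hsfn, inner_zero_right] at hinner
    nlinarith
  have hderiv : ∀ t : ℝ, HasDerivAt (fun t : ℝ ↦ ⟪dualityMap K (z + t • (y - z)), y - z⟫_ℝ)
      ⟪dualityDeriv K (z + t • (y - z)) (y - z), y - z⟫_ℝ t := fun t ↦ by
    simpa using ((hK.hasFDerivAt_dualityMap (hline_ne t)).comp_hasDerivAt t (hline t)).inner ℝ
      (hasDerivAt_const t (y - z))
  obtain ⟨t, -, ht⟩ := exists_hasDerivAt_eq_zero zero_lt_one
    (fun t _ ↦ (hderiv t).continuousAt.continuousWithinAt) (by simp [hyz]) fun t _ ↦ hderiv t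
  exact (hK.inner_dualityDeriv_pos (hline_ne t) (sub_ne_zero.2 hne)).ne' ht

theorem exists_norm_le_mul_sfn : ∃ C, 0 < C ∧ ∀ y, ‖y‖ ≤ C * sfn K y := by
  obtain ⟨C, hC, hle⟩ := (hK.posHomogeneous_sfn.rpow_const (fun _ ↦ hK.sfn_pos)
    (-1)).exists_norm_le
  refine ⟨C + 1, by positivity, fun y ↦ ?_⟩
  rcases eq_or_ne y 0 with rfl | hy
  · simp [hK.sfn_zero]
  have hsfn := hK.sfn_pos hy
  have hnorm := norm_pos_iff.2 hy
  have := hle y hy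
  rw [one_mul, rpow_neg_one, rpow_neg_one, norm_of_nonneg (by positivity), ← div_eq_mul_inv,
    le_div_iff₀ hnorm, inv_mul_le_iff₀ hsfn] at this
  nlinarith

theorem hasFDerivAt_sfn_sq_div_two (y : Eu n) :
    HasFDerivAt (fun z ↦ sfn K z ^ 2 / 2) (innerSL ℝ (dualityMap K y)) y := by
  rcases eq_or_ne y 0 with rfl | hy
  · have hhom : PosHomogeneous 2 fun z ↦ sfn K z ^ 2 := by
      simpa using hK.posHomogeneous_sfn.pow 2
    simpa [hK.dualityMap_zero] using!
      (hhom.hasFDerivAt_zero (by simp [hK.sfn_zero])).mul_const 2⁻¹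
  · refine (((hK.hasFDerivAt_sfn hy).pow 2).mul_const 2⁻¹).congr_fderiv ?_
    ext v
    simp [dualityMap]
    ring

theorem dualityMap_surjective : Function.Surjective (dualityMap K) := by
  intro m
  obtain ⟨C, hC, hle⟩ := hK.exists_norm_le_mul_sfn
  have hderiv : ∀ y, HasFDerivAt (fun z ↦ sfn K z ^ 2 / 2 - innerSL ℝ m z)
      (innerSL ℝ (dualityMap K y) - innerSL ℝ m) y := fun y ↦
    (hK.hasFDerivAt_sfn_sq_div_two y).fun_sub (innerSL ℝ m).hasFDerivAt
  have hcoercive : Filter.Tendsto (fun z ↦ sfn K z ^ 2 / 2 - innerSL ℝ m z)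
      (Filter.cocompact (Eu n)) .atTop := by
    have hquad : Filter.Tendsto (fun r : ℝ ↦ r * (r / (2 * C ^ 2) - ‖m‖)) .atTop .atTop :=
      Filter.tendsto_id.atTop_mul_atTop₀ (Filter.tendsto_atTop_add_const_right _ _
        (Filter.tendsto_id.atTop_div_const (by positivity)))
    refine Filter.tendsto_atTop_mono (fun z ↦ ?_) (hquad.comp (tendsto_norm_cocompact_atTop))
    have hsq : ‖z‖ ^ 2 / C ^ 2 ≤ sfn K z ^ 2 := by
      rw [div_le_iff₀ (by positivity), ← mul_pow, mul_comm]
      exact pow_le_pow_left₀ (norm_nonneg z) (hle z) 2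
    calc ‖z‖ * (‖z‖ / (2 * C ^ 2) - ‖m‖) = ‖z‖ ^ 2 / C ^ 2 / 2 - ‖m‖ * ‖z‖ := by field_simp
      _ ≤ sfn K z ^ 2 / 2 - ⟪m, z⟫_ℝ := by gcongr; exact real_inner_le_norm m z
  obtain ⟨y, hy⟩ := Continuous.exists_forall_le
    (continuous_iff_continuousAt.2 fun y ↦ (hderiv y).continuousAt) hcoercive
  have hcrit := IsLocalMin.hasFDerivAt_eq_zero (.of_forall hy) (hderiv y)
  exact ⟨y, (InnerProductSpace.toDual ℝ (Eu n)).injective (sub_eq_zero.1 hcrit)⟩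

theorem contDiffAt_dualityMap (hz : z ≠ 0) : ContDiffAt ℝ (⊤ : ℕ∞) (dualityMap K) z :=
  (hK.contDiffAt_sfn hz).smul (hK.contDiffAt_gradient hz)

theorem posHomogeneous_dualityDeriv : PosHomogeneous 0 (dualityDeriv K) := by
  have hfderiv : ∀ {z}, z ≠ 0 → fderiv ℝ (dualityMap K) z = dualityDeriv K z := fun hz ↦
    (hK.hasFDerivAt_dualityMap hz).fderiv
  have hhom := hK.posHomogeneous_dualityMap.fderiv fun z hz ↦
    ((hK.contDiffAt_dualityMap hz).of_le (by norm_cast)).contDiffWithinAt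
  rw [sub_self] at hhom
  refine ⟨hhom.continuousOn.congr fun z hz ↦ (hfderiv hz).symm, fun hz r hr ↦ ?_⟩
  rw [← hfderiv hz, ← hfderiv (smul_ne_zero hr.ne' hz), hhom.map_smul hz hr]

theorem dualityDeriv_eq_transvection_comp (x : Sph n) :
    (dualityDeriv K x : Eu n →ₗ[ℝ] Eu n) =
      LinearMap.transvection (innerSL ℝ (x : Eu n) : Eu n →ₗ[ℝ] ℝ)
          ((sfn K x)⁻¹ • gradient (sfn K) x - x) ∘ₗ
        (sfn K x • ((hessA K x + tens (x : Eu n) : Eu n →L[ℝ] Eu n) : Eu n →ₗ[ℝ] Eu n)) ∘ₗ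
        LinearMap.transvection (innerSL ℝ (gradient (sfn K) x - x) : Eu n →ₗ[ℝ] ℝ) (x : Eu n) := by
  have hx := ne_zero_of_mem_unit_sphere x
  have hsfn := (hK.sfn_pos hx).ne'
  have hxx : ⟪(x : Eu n), x⟫_ℝ = 1 := by simp
  have hxA : ∀ v, ⟪(x : Eu n), hessA K x v⟫_ℝ = 0 := fun v ↦ by
    rw [real_inner_comm, hK.inner_hessA_comm hx, hK.hessA_apply_self hx, inner_zero_left]
  ext1 v
  simp only [LinearMap.comp_apply, LinearMap.transvection.apply, dualityDeriv, tens,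
    ContinuousLinearMap.coe_coe, LinearMap.smul_apply, innerSL_apply_apply, map_add, map_smul,
    add_apply, smul_apply, ContinuousLinearMap.smulRight_apply, inner_sub_left, hxA,
    hK.hessA_apply_self hx, inner_zero_right, hxx]
  match_scalars <;> field_simp <;> ring

theorem det_dualityDeriv (x : Sph n) :
    (dualityDeriv K x).det = sfn K x ^ (n + 1) * dens K x := by
  have hx := ne_zero_of_mem_unit_sphere x
  have hxx : ⟪(x : Eu n), x⟫_ℝ = 1 := by simp
  have hx_gradient : ⟪(x : Eu n), gradient (sfn K) x⟫_ℝ = sfn K x := by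
    rw [real_inner_comm, hK.inner_gradient_self hx]
  rw [ContinuousLinearMap.det, hK.dualityDeriv_eq_transvection_comp, LinearMap.det_comp,
    LinearMap.det_comp, LinearMap.transvection.det, LinearMap.transvection.det,
    LinearMap.det_smul, finrank_euclideanSpace_fin, dens, rK]
  simp only [ContinuousLinearMap.coe_coe, innerSL_apply_apply, inner_sub_left, inner_sub_right,
    real_inner_smul_right, hx_gradient, hK.inner_gradient_self hx, hxx,
    inv_mul_cancel₀ (hK.sfn_pos hx).ne']
  ring

end IsSmoothConvexBody

namespace IsSmoothConvexBody

variable {n : ℕ} {K : Set (Eu n)} (hK : IsSmoothConvexBody K)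

include hK

theorem continuous_sfn : Continuous (sfn K) :=
  hK.posHomogeneous_sfn.continuous one_pos hK.sfn_zero

theorem continuous_dualityMap : Continuous (dualityMap K) :=
  hK.posHomogeneous_dualityMap.continuous one_pos hK.dualityMap_zero

theorem exists_norm_le_mul_norm_dualityMap :
    ∃ C, 0 < C ∧ ∀ y, ‖y‖ ≤ C * ‖dualityMap K y‖ := by
  obtain ⟨C, hC, hle⟩ := hK.exists_norm_le_mul_sfn
  refine ⟨C ^ 2, by positivity, fun y ↦ ?_⟩
  have hsq : ‖y‖ * ‖y‖ ≤ C ^ 2 * ‖dualityMap K y‖ * ‖y‖ :=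
    calc ‖y‖ * ‖y‖ ≤ (C * sfn K y) * (C * sfn K y) :=
          mul_self_le_mul_self (norm_nonneg y) (hle y)
      _ = C ^ 2 * ⟪dualityMap K y, y⟫_ℝ := by rw [hK.inner_dualityMap_self]; ring
      _ ≤ C ^ 2 * (‖dualityMap K y‖ * ‖y‖) := by gcongr; exact real_inner_le_norm _ _
      _ = C ^ 2 * ‖dualityMap K y‖ * ‖y‖ := by ring
  rcases (norm_nonneg y).eq_or_lt with hy | hy
  · rw [← hy]; positivity
  · exact le_of_mul_le_mul_right hsq hy

theorem isProperMap_dualityMap : IsProperMap (dualityMap K) := by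
  refine isProperMap_iff_tendsto_cocompact.2 ⟨hK.continuous_dualityMap, ?_⟩
  obtain ⟨C, hC, hle⟩ := hK.exists_norm_le_mul_norm_dualityMap
  rw [← cobounded_eq_cocompact, ← comap_norm_atTop, Filter.tendsto_comap_iff]
  refine Filter.tendsto_atTop_mono (fun y ↦ ?_) (Filter.tendsto_comap.const_mul_atTop
    (inv_pos.2 hC))
  exact (inv_mul_le_iff₀ hC).2 (hle y)

/-- `dualityMap K` as a homeomorphism of `ℝ^{n+1}`. -/
def dualityHomeomorph : Eu n ≃ₜ Eu n :=
  (Equiv.ofBijective (dualityMap K)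
    ⟨hK.dualityMap_injective, hK.dualityMap_surjective⟩).toHomeomorphOfContinuousClosed
    hK.continuous_dualityMap hK.isProperMap_dualityMap.isClosedMap

theorem coe_dualityHomeomorph : ⇑hK.dualityHomeomorph = dualityMap K := rfl

end IsSmoothConvexBody

section DualityMeas

variable {n : ℕ}

/-- The Lebesgue measure pulled back by `dualityMap K`. -/
def dualityMeas (K : Set (Eu n)) : Measure (Eu n) :=
  volume.withDensity fun y ↦ .ofReal |(dualityDeriv K y).det|

end DualityMeas

namespace IsSmoothConvexBody

variable {n : ℕ} {K : Set (Eu n)} (hK : IsSmoothConvexBody K)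

include hK

theorem measurableEmbedding_dualityMap : MeasurableEmbedding (dualityMap K) :=
  hK.dualityHomeomorph.measurableEmbedding

theorem measurePreserving_dualityMap :
    MeasurePreserving (dualityMap K) (dualityMeas K) volume := by
  refine ⟨hK.continuous_dualityMap.measurable, ?_⟩
  have hmap := map_withDensity_abs_det_fderiv_eq_addHaar (volume : Measure (Eu n))
    (measurableSet_singleton 0).compl.nullMeasurableSet
    (fun y hy ↦ (hK.hasFDerivAt_dualityMap hy).hasFDerivWithinAt)
    hK.dualityMap_injective.injOn
  rwa [Set.image_compl_eq ⟨hK.dualityMap_injective, hK.dualityMap_surjective⟩,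
    Set.image_singleton, hK.dualityMap_zero, restrict_compl_singleton] at hmap

theorem posHomogeneous_abs_det_dualityDeriv :
    PosHomogeneous 0 fun y ↦ |(dualityDeriv K y).det| :=
  ⟨(ContinuousLinearMap.continuous_det.comp_continuousOn
    hK.posHomogeneous_dualityDeriv.continuousOn).abs, fun hx r hr ↦ by
    simp [hK.posHomogeneous_dualityDeriv.map_smul hx hr]⟩

theorem integrable_dualityMeas_iff {φ : Eu n → ℝ} :
    Integrable φ (dualityMeas K) ↔ Integrable fun y ↦ |(dualityDeriv K y).det| * φ y := by
  rw [dualityMeas, integrable_withDensity_iff_integrable_smul'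
    hK.posHomogeneous_abs_det_dualityDeriv.measurable.ennreal_ofReal (by simp)]
  simp [ENNReal.toReal_ofReal (abs_nonneg _)]

theorem integral_dualityMeas (φ : Eu n → ℝ) :
    ∫ y, φ y ∂dualityMeas K = ∫ y, |(dualityDeriv K y).det| * φ y := by
  rw [dualityMeas, integral_withDensity_eq_integral_toReal_smul
    hK.posHomogeneous_abs_det_dualityDeriv.measurable.ennreal_ofReal (by simp)]
  simp [ENNReal.toReal_ofReal (abs_nonneg _)]

variable {k : ℝ} {N φ : Eu n → ℝ}

theorem integrable_exp_neg_sq_mul_dualityMeas (hN : PosHomogeneous 1 N)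
    (hN_pos : ∀ x ≠ 0, 0 < N x) (hφ : PosHomogeneous k φ) (hk : -1 < n + k) :
    Integrable (fun y ↦ exp (-N y ^ 2 / 2) * φ y) (dualityMeas K) := by
  rw [hK.integrable_dualityMeas_iff]
  simp_rw [mul_left_comm]
  exact integrable_exp_neg_sq_mul hN hN_pos
    (by simpa only [zero_add] using hK.posHomogeneous_abs_det_dualityDeriv.mul hφ) hk

theorem integral_exp_neg_sfn_sq_mul_dualityMeas (hφ : PosHomogeneous k φ) (hk : -1 < n + k) :
    ∫ y, exp (-sfn K y ^ 2 / 2) * φ y ∂dualityMeas K =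
      gaussMoment (n + k) * ∫ x : Sph n, sfn K x ^ (-k) * φ x * dens K x ∂sphMeas n := by
  rw [hK.integral_dualityMeas]
  simp_rw [mul_left_comm]
  rw [integral_exp_neg_sq_mul hK.posHomogeneous_sfn (fun _ ↦ hK.sfn_pos)
    (by simpa only [zero_add] using hK.posHomogeneous_abs_det_dualityDeriv.mul hφ) hk]
  congr! 3 with x
  have hsfn := hK.sfn_pos (ne_zero_of_mem_unit_sphere x)
  rw [hK.det_dualityDeriv, abs_of_nonneg (mul_nonneg (by positivity) (hK.dens_nonneg x)),
    show (-(n + k + 1) : ℝ) = -k - (n + 1 : ℕ) by push_cast; ring, rpow_sub_natCast hsfn.ne']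
  field_simp

theorem integral_exp_mul_integral_exp_dualityMeas_le_sq {u v w : Eu n → ℝ}
    (hu : Measurable u) (hv : Measurable v) (hw : Measurable w)
    (hu_int : Integrable (fun y ↦ exp (u y)) (dualityMeas K))
    (hv_int : Integrable (fun y ↦ exp (v y)) (dualityMeas K))
    (hw_int : Integrable (fun y ↦ exp (w y)) (dualityMeas K))
    (huvw : ∀ y₁ y₂ y, dualityMap K y = midpoint ℝ (dualityMap K y₁) (dualityMap K y₂) →
      u y₁ + v y₂ ≤ 2 * w y) :
    (∫ y, exp (u y) ∂dualityMeas K) * ∫ y, exp (v y) ∂dualityMeas K ≤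
      (∫ y, exp (w y) ∂dualityMeas K) ^ 2 := by
  have hsymm := hK.measurePreserving_dualityMap.symm hK.dualityHomeomorph.toMeasurableEquiv
  have hemb := hK.dualityHomeomorph.symm.measurableEmbedding
  rw [← hsymm.integral_comp hemb, ← hsymm.integral_comp hemb, ← hsymm.integral_comp hemb]
  refine integral_exp_mul_integral_exp_le_sq (hu.comp hemb.measurable) (hv.comp hemb.measurable)
    (hw.comp hemb.measurable) ((hsymm.integrable_comp_emb hemb).2 hu_int)
    ((hsymm.integrable_comp_emb hemb).2 hv_int) ((hsymm.integrable_comp_emb hemb).2 hw_int)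
    fun m₁ m₂ ↦ huvw _ _ _ ?_
  simp only [← hK.coe_dualityHomeomorph, Homeomorph.apply_symm_apply,
    Homeomorph.toMeasurableEquiv_symm_coe]

end IsSmoothConvexBody

section FirstVariation

theorem hasFDerivAt_of_forall_add_inner_le {E : Type*} [NormedAddCommGroup E]
    [InnerProductSpace ℝ E] {f : E → ℝ} {s : E → E}
    (hs : ∀ x y, f x + ⟪s x, y - x⟫_ℝ ≤ f y) {x : E} (hs_cont : ContinuousAt s x) :
    HasFDerivAt f (innerSL ℝ (s x)) x := by
  refine .of_isLittleO (Asymptotics.isLittleO_iff.2 fun ε hε ↦ ?_)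
  filter_upwards [Metric.continuousAt_iff'.1 hs_cont ε hε] with y hy
  have hlower := hs x y
  have hupper := hs y x
  have hcauchy := real_inner_le_norm (s y - s x) (y - x)
  rw [inner_sub_left] at hcauchy
  rw [← neg_sub y x, inner_neg_right] at hupper
  rw [dist_eq_norm] at hy
  rw [innerSL_apply_apply, norm_of_nonneg (by linarith)]
  calc f y - f x - ⟪s x, y - x⟫_ℝ ≤ ‖s y - s x‖ * ‖y - x‖ := by linarith
    _ ≤ ε * ‖y - x‖ := by gcongr

end FirstVariation

namespace IsSmoothConvexBody

variable {n : ℕ} {K : Set (Eu n)} (hK : IsSmoothConvexBody K)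

include hK

theorem dualityHomeomorph_symm_dualityMap (y : Eu n) :
    hK.dualityHomeomorph.symm (dualityMap K y) = y :=
  hK.dualityHomeomorph.symm_apply_apply y

theorem hasFDerivAt_sfn_symm_sq_div_two (m : Eu n) :
    HasFDerivAt (fun m ↦ sfn K (hK.dualityHomeomorph.symm m) ^ 2 / 2)
      (innerSL ℝ (hK.dualityHomeomorph.symm m)) m := by
  refine hasFDerivAt_of_forall_add_inner_le (s := hK.dualityHomeomorph.symm) (fun m₁ m₂ ↦ ?_)
    hK.dualityHomeomorph.symm.continuous.continuousAt
  obtain ⟨y₁, rfl⟩ := hK.dualityMap_surjective m₁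
  obtain ⟨y₂, rfl⟩ := hK.dualityMap_surjective m₂
  have hle := hK.inner_dualityMap_le y₂ y₁
  have hself := hK.inner_dualityMap_self y₁
  rw [real_inner_comm] at hle hself
  simp only [hK.dualityHomeomorph_symm_dualityMap, inner_sub_right]
  nlinarith [sq_nonneg (sfn K y₁ - sfn K y₂)]

theorem integral_exp_mul_inner_dualityMap_mul_inner (e : Eu n) :
    ∫ y, exp (-sfn K y ^ 2 / 2) * (⟪e, dualityMap K y⟫_ℝ * ⟪e, y⟫_ℝ) ∂dualityMeas K =
      ∫ y, exp (-sfn K y ^ 2 / 2) * ‖e‖ ^ 2 ∂dualityMeas K := by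
  set Φ := hK.dualityHomeomorph
  have hn : (-1 : ℝ) < n := by linarith [n.cast_nonneg (α := ℝ)]
  have hΦ := hK.measurePreserving_dualityMap
  have hΦ_emb := hK.measurableEmbedding_dualityMap
  have hsymm : ∀ y, Φ.symm (dualityMap K y) = y := hK.dualityHomeomorph_symm_dualityMap
  have happly : ∀ m, dualityMap K (Φ.symm m) = m := Φ.apply_symm_apply
  have hint : ∀ {k : ℝ} {φ : Eu n → ℝ}, PosHomogeneous k φ → 0 ≤ k →
      Integrable fun m ↦ exp (-sfn K (Φ.symm m) ^ 2 / 2) * φ (Φ.symm m) := fun hφ hk ↦ by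
    rw [← hΦ.integrable_comp_emb hΦ_emb]
    simpa only [Function.comp_def, hsymm] using hK.integrable_exp_neg_sq_mul_dualityMeas
      hK.posHomogeneous_sfn (fun _ ↦ hK.sfn_pos) hφ (by linarith [hn])
  have hderiv : ∀ m, HasFDerivAt (fun m ↦ exp (-sfn K (Φ.symm m) ^ 2 / 2))
      (exp (-sfn K (Φ.symm m) ^ 2 / 2) • -innerSL ℝ (Φ.symm m)) m := fun m ↦ by
    simpa only [neg_div] using (hK.hasFDerivAt_sfn_symm_sq_div_two m).fun_neg.exp
  have hdual_hom := hK.posHomogeneous_dualityMap.clm_comp (innerSL ℝ e)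
  -- `∇W*` is the inverse of the duality map: integrate `exp (-W*)` by parts against `⟪e, ·⟫`.
  have hparts := integral_mul_fderiv_eq_neg_fderiv_mul_of_integrable (𝕜 := ℝ)
    (μ := (volume : Measure (Eu n))) (v := e)
    (f := fun m ↦ ⟪e, m⟫_ℝ) (g := fun m ↦ exp (-sfn K (Φ.symm m) ^ 2 / 2)) ?_ ?_ ?_
    (fun m _ ↦ (hasFDerivAt_inner_right e m).differentiableAt)
    (fun m _ ↦ (hderiv m).differentiableAt)
  · rw [← hΦ.integral_comp hΦ_emb, ← hΦ.integral_comp hΦ_emb] at hparts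
    simp only [(hasFDerivAt_inner_right e _).fderiv, (hderiv _).fderiv, hsymm] at hparts
    simpa [mul_assoc, mul_left_comm, mul_comm, real_inner_comm, integral_neg] using hparts
  · simpa [(hasFDerivAt_inner_right e _).fderiv, mul_comm] using hint (.const (‖e‖ ^ 2)) le_rfl
  · simpa [(hderiv _).fderiv, happly, mul_left_comm, real_inner_comm] using
      (hint (hdual_hom.mul (posHomogeneous_inner e)) (by norm_num)).neg
  · simpa [happly, mul_comm] using hint hdual_hom (by norm_num)

theorem norm_sq_mul_integral_dens (e : Eu n) :
    ‖e‖ ^ 2 * ∫ x : Sph n, dens K x ∂sphMeas n = (n + 1) *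
      ∫ x : Sph n, ⟪e, gradient (sfn K) x⟫_ℝ * ⟪e, (x : Eu n)⟫_ℝ / sfn K x * dens K x
        ∂sphMeas n := by
  have hn : (-1 : ℝ) < n := by linarith [n.cast_nonneg (α := ℝ)]
  have hid := hK.integral_exp_mul_inner_dualityMap_mul_inner e
  simp only [← innerSL_apply_apply ℝ] at hid
  rw [hK.integral_exp_neg_sfn_sq_mul_dualityMeas
      ((hK.posHomogeneous_dualityMap.clm_comp (innerSL ℝ e)).mul (.clm (innerSL ℝ e)))
      (by linarith), hK.integral_exp_neg_sfn_sq_mul_dualityMeas (.const _) (by simpa using hn),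
    add_zero, one_add_one_eq_two, gaussMoment_add_two hn, mul_comm (_ + 1) (gaussMoment _),
    mul_assoc] at hid
  have hmoment := mul_left_cancel₀ (gaussMoment_pos hn).ne' hid
  simp only [neg_zero, rpow_zero, one_mul, integral_const_mul] at hmoment
  rw [← hmoment]
  congr! 3 with x
  have hsfn := hK.sfn_pos (ne_zero_of_mem_unit_sphere x)
  simp only [innerSL_apply_apply, dualityMap, real_inner_smul_right,
    rpow_neg hsfn.le, rpow_two]
  field_simp

end IsSmoothConvexBody

section SecondOrder

open ProbabilityTheory

/-- The symmetric second difference of `φ` at `0` with step `t`. -/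
def secondDiff (φ : ℝ → ℝ) (t : ℝ) : ℝ := φ t + φ (-t) - 2 * φ 0

theorem tendsto_secondDiff_div_sq {φ φ' : ℝ → ℝ} {φ'' : ℝ}
    (hφ : ∀ᶠ s in 𝓝 0, HasDerivAt φ (φ' s) s) (hφ' : HasDerivAt φ' φ'' 0) :
    Filter.Tendsto (fun t ↦ secondDiff φ t / t ^ 2) (𝓝[≠] 0) (𝓝 φ'') := by
  have hneg : Filter.Tendsto (fun t : ℝ ↦ -t) (𝓝 0) (𝓝 0) := by
    simpa using (continuous_neg (G := ℝ)).tendsto 0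
  have hnumer : ∀ᶠ t in 𝓝 0, HasDerivAt (secondDiff φ) (φ' t - φ' (-t)) t := by
    filter_upwards [hφ, hneg.eventually hφ] with t ht hneg_t
    convert! (ht.fun_add (hneg_t.comp t (hasDerivAt_neg t))).sub_const (2 * φ 0) using 1
    ring
  refine HasDerivAt.lhopital_zero_nhdsNE (g' := fun t ↦ 2 * t)
    (hnumer.filter_mono nhdsWithin_le_nhds)
    (.of_forall fun t ↦ by simpa using hasDerivAt_pow 2 t)
    (by filter_upwards [self_mem_nhdsWithin] with t ht using mul_ne_zero two_ne_zero ht) ?_ ?_ ?_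
  · convert! hnumer.self_of_nhds.continuousAt.tendsto.mono_left nhdsWithin_le_nhds using 2
    simp only [secondDiff, neg_zero]
    ring
  · simpa using ((continuous_pow 2).tendsto (0 : ℝ)).mono_left nhdsWithin_le_nhds
  · have hslope : HasDerivAt (fun t ↦ φ' t - φ' (-t)) (2 * φ'') 0 := by
      convert! hφ'.sub (HasDerivAt.comp 0 (h₂ := φ') (by simpa using hφ')
        (hasDerivAt_neg 0)) using 1
      ring
    convert! (hasDerivAt_iff_tendsto_slope.1 hslope).div_const 2 using 2 with t
    · simp [slope_def_field, div_div, mul_comm]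
    · ring_nf

theorem tendsto_secondDiff_cgf_div_sq {Ω : Type*} [MeasurableSpace Ω] {μ : Measure Ω}
    [IsProbabilityMeasure μ] {X : Ω → ℝ} (hX : ∀ t, Integrable (fun ω ↦ exp (t * X ω)) μ) :
    Filter.Tendsto (fun t ↦ secondDiff (cgf X μ) t / t ^ 2) (𝓝[≠] 0) (𝓝 Var[X; μ]) := by
  have huniv : integrableExpSet X μ = Set.univ := Set.eq_univ_of_forall hX
  have hcgf : ∀ t, AnalyticAt ℝ (cgf X μ) t := fun t ↦ analyticAt_cgf (by simp [huniv])
  have hvar : Var[X; μ] = deriv (deriv (cgf X μ)) 0 := by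
    have htilted := variance_tilted_mul (X := X) (μ := μ) (t := 0) (by simp [huniv])
    simpa [iteratedDeriv_succ] using htilted
  rw [hvar]
  exact tendsto_secondDiff_div_sq (.of_forall fun t ↦ (hcgf t).differentiableAt.hasDerivAt)
    (hcgf 0).deriv.differentiableAt.hasDerivAt

theorem tendsto_integral_exp_sub_one_div_sq {Ω : Type*} [MeasurableSpace Ω] {μ : Measure Ω}
    [IsFiniteMeasure μ] {q : ℝ → Ω → ℝ} {a : Ω → ℝ} {C : ℝ}
    (hq_meas : ∀ t, AEStronglyMeasurable (q t) μ) (hq_le : ∀ t ω, |q t ω| ≤ C * t ^ 2)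
    (hq : ∀ᵐ ω ∂μ, Filter.Tendsto (fun t ↦ q t ω / t ^ 2) (𝓝[≠] 0) (𝓝 (a ω))) :
    Filter.Tendsto (fun t ↦ ∫ ω, (exp (q t ω) - 1) / t ^ 2 ∂μ) (𝓝[≠] 0) (𝓝 (∫ ω, a ω ∂μ)) := by
  have hsq : Filter.Tendsto (fun t : ℝ ↦ C * t ^ 2) (𝓝[≠] 0) (𝓝 0) := by
    simpa using ((continuous_pow 2).const_mul C).continuousAt.tendsto.mono_left
      (nhdsWithin_le_nhds (a := (0 : ℝ)))
  refine tendsto_integral_filter_of_dominated_convergence (fun _ ↦ 2 * C)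
    (.of_forall fun t ↦ (by fun_prop : Continuous fun u ↦ (exp u - 1) / t ^ 2)
      |>.comp_aestronglyMeasurable (hq_meas t)) ?_ (integrable_const _) ?_
  · filter_upwards [hsq.eventually_le_const one_pos, self_mem_nhdsWithin] with t ht ht_ne
    refine .of_forall fun ω ↦ ?_
    rw [norm_div, norm_eq_abs, norm_pow, norm_eq_abs, sq_abs,
      div_le_iff₀ (sq_pos_of_ne_zero ht_ne)]
    linarith [abs_exp_sub_one_le ((hq_le t ω).trans ht), hq_le t ω]
  · filter_upwards [hq] with ω hω
    have hq_zero : Filter.Tendsto (fun t ↦ q t ω) (𝓝[≠] 0) (𝓝 0) :=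
      squeeze_zero_norm (fun t ↦ hq_le t ω) hsq
    have hslope : Filter.Tendsto (dslope exp 0) (𝓝 0) (𝓝 1) := by
      simpa using (continuousAt_dslope_same.2
        (differentiable_exp.differentiableAt (x := 0))).tendsto
    refine ((mul_one (a ω)) ▸ hω.mul (hslope.comp hq_zero)).congr fun t ↦ ?_
    have hexp := sub_smul_dslope exp 0 (q t ω)
    rw [sub_zero, smul_eq_mul, exp_zero] at hexp
    rw [← hexp, Function.comp_apply, div_mul_eq_mul_div]

theorem variance_le_integral_of_mgf_mul_mgf_neg_le_sq {Ω : Type*} [MeasurableSpace Ω]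
    {μ : Measure Ω} [IsProbabilityMeasure μ] {X : Ω → ℝ} {q : ℝ → Ω → ℝ} {a : Ω → ℝ} {C : ℝ}
    (hX : ∀ t, Integrable (fun ω ↦ exp (t * X ω)) μ)
    (hq_meas : ∀ t, AEStronglyMeasurable (q t) μ) (hq_le : ∀ t ω, |q t ω| ≤ C * t ^ 2)
    (hq : ∀ᵐ ω ∂μ, Filter.Tendsto (fun t ↦ q t ω / t ^ 2) (𝓝[≠] 0) (𝓝 (a ω)))
    (hle : ∀ t, mgf X μ t * mgf X μ (-t) ≤ (∫ ω, exp (q t ω) ∂μ) ^ 2) :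
    Var[X; μ] ≤ 2 * ∫ ω, a ω ∂μ := by
  have hexp : ∀ t, Integrable (fun ω ↦ exp (q t ω)) μ := fun t ↦
    .of_bound (continuous_exp.comp_aestronglyMeasurable (hq_meas t)) (exp (C * t ^ 2))
      (.of_forall fun ω ↦ by
        rw [norm_of_nonneg (exp_pos _).le]
        exact exp_le_exp.2 (le_of_abs_le (hq_le t ω)))
  refine le_of_tendsto_of_tendsto' (tendsto_secondDiff_cgf_div_sq hX)
    ((tendsto_integral_exp_sub_one_div_sq hq_meas hq_le hq).const_mul 2) fun t ↦ ?_
  rw [integral_div, integral_sub (hexp t) (integrable_const 1), ← mul_div_assoc]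
  refine div_le_div_of_nonneg_right ?_ (sq_nonneg t)
  calc secondDiff (cgf X μ) t = log (mgf X μ t * mgf X μ (-t)) := by
        rw [secondDiff, cgf_zero, mul_zero, sub_zero, cgf, cgf,
          log_mul (mgf_pos (hX t)).ne' (mgf_pos (hX (-t))).ne']
    _ ≤ log ((∫ ω, exp (q t ω) ∂μ) ^ 2) :=
        log_le_log (mul_pos (mgf_pos (hX t)) (mgf_pos (hX (-t)))) (hle t)
    _ = 2 * log (∫ ω, exp (q t ω) ∂μ) := by rw [log_pow, Nat.cast_ofNat]
    _ ≤ 2 * (∫ ω, exp (q t ω) ∂μ - ∫ _, 1 ∂μ) := by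
        rw [integral_const, probReal_univ, one_smul]
        gcongr
        exact log_le_sub_one_of_pos (integral_exp_pos (hexp t))

end SecondOrder

section PerturbedEnergy

variable {n : ℕ}

/-- The derivative at `s = 0` of `s ↦ (h (y + s e) - s ζ)² / 2`, where `h` is the support function
of `K`. -/
def dualityTilt (K : Set (Eu n)) (e : Eu n) (ζ : ℝ) (y : Eu n) : ℝ :=
  ⟪e, dualityMap K y⟫_ℝ - ζ * sfn K y

/-- The function `s ↦ (h (y + s e) - s ζ)² / 2`, where `h` is the support function of `K`. -/
def perturbedEnergy (K : Set (Eu n)) (e : Eu n) (ζ : ℝ) (y : Eu n) (s : ℝ) : ℝ :=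
  (sfn K (y + s • e) - s * ζ) ^ 2 / 2

end PerturbedEnergy

namespace IsSmoothConvexBody

variable {n : ℕ} {K : Set (Eu n)} (hK : IsSmoothConvexBody K) (e : Eu n) (ζ : ℝ) {y : Eu n}

include hK

theorem posHomogeneous_dualityTilt : PosHomogeneous 1 (dualityTilt K e ζ) :=
  (hK.posHomogeneous_dualityMap.clm_comp (innerSL ℝ e)).sub
    (hK.posHomogeneous_sfn.clm_comp (.lsmul ℝ ℝ ζ))

theorem dualityTilt_midpoint_le {y₁ y₂ : Eu n}
    (hy : dualityMap K y = midpoint ℝ (dualityMap K y₁) (dualityMap K y₂)) (t : ℝ) :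
    -sfn K y₁ ^ 2 / 2 + t * dualityTilt K e ζ y₁ + (-sfn K y₂ ^ 2 / 2 + -t * dualityTilt K e ζ y₂) ≤
      2 * (-sfn K y ^ 2 / 2 + secondDiff (perturbedEnergy K e ζ y) t / 2) := by
  have hplus := hK.inner_dualityMap_le y₁ (y + t • e)
  have hminus := hK.inner_dualityMap_le y₂ (y + -t • e)
  have hself := hK.inner_dualityMap_self y
  rw [hy, midpoint_eq_smul_add, invOf_eq_inv, real_inner_smul_left, inner_add_left] at hself
  rw [inner_add_right, real_inner_smul_right, real_inner_comm e] at hplus hminus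
  simp only [dualityTilt, secondDiff, perturbedEnergy, zero_smul, add_zero, zero_mul, sub_zero]
  nlinarith [sq_nonneg (sfn K y₁ - (sfn K (y + t • e) - t * ζ)),
    sq_nonneg (sfn K y₂ - (sfn K (y + -t • e) - -t * ζ))]

theorem tendsto_secondDiff_perturbedEnergy (hy : y ≠ 0) :
    Filter.Tendsto (fun t ↦ secondDiff (perturbedEnergy K e ζ y) t / t ^ 2) (𝓝[≠] 0)
      (𝓝 ((⟪e, gradient (sfn K) y⟫_ℝ - ζ) ^ 2 + sfn K y * ⟪e, hessA K y e⟫_ℝ)) := by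
  have hline : ∀ s : ℝ, HasDerivAt (fun s : ℝ ↦ y + s • e) e s := fun s ↦ by
    simpa using ((hasDerivAt_id s).smul_const e).const_add y
  have hsfn : ∀ {s : ℝ}, y + s • e ≠ 0 → HasDerivAt (fun s ↦ sfn K (y + s • e) - s * ζ)
      (⟪e, gradient (sfn K) (y + s • e)⟫_ℝ - ζ) s := fun {s} hs ↦ by
    simpa [real_inner_comm] using!
      ((hK.hasFDerivAt_sfn hs).comp_hasDerivAt s (hline s)).fun_sub ((hasDerivAt_id s).mul_const ζ)
  have hgrad : HasDerivAt (fun s : ℝ ↦ ⟪e, gradient (sfn K) (y + s • e)⟫_ℝ - ζ)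
      ⟪e, hessA K y e⟫_ℝ 0 := by
    have hgrad_line : HasDerivAt (fun s : ℝ ↦ gradient (sfn K) (y + s • e)) (hessA K y e) 0 :=
      HasFDerivAt.comp_hasDerivAt (0 : ℝ) (l := gradient (sfn K))
        (by simpa using hK.hasFDerivAt_gradient hy) (hline 0)
    simpa using ((innerSL ℝ e).hasFDerivAt.comp_hasDerivAt 0 hgrad_line).sub_const ζ
  have hne : ∀ᶠ s : ℝ in 𝓝 0, y + s • e ≠ 0 :=
    (hline 0).continuousAt.eventually_ne (by simpa)
  refine tendsto_secondDiff_div_sq (φ' := fun s ↦ (sfn K (y + s • e) - s * ζ) *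
    (⟪e, gradient (sfn K) (y + s • e)⟫_ℝ - ζ)) (hne.mono fun s hs ↦ ?_) ?_
  · convert! ((hsfn hs).fun_pow 2).div_const 2 using 1
    push_cast
    ring
  · convert! (hsfn (by simpa)).fun_mul hgrad using 1
    simp
    ring

theorem abs_secondDiff_sfn_sq_div_two_le {C : ℝ}
    (hC : ∀ x y, ‖dualityMap K x - dualityMap K y‖ ≤ C * ‖x - y‖) (v : Eu n) :
    |sfn K (y + v) ^ 2 / 2 + sfn K (y - v) ^ 2 / 2 - sfn K y ^ 2| ≤ 2 * C * ‖v‖ ^ 2 := by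
  have hplus := hK.sfn_sq_div_two_add_inner_le y (y + v)
  have hminus := hK.sfn_sq_div_two_add_inner_le y (y - v)
  have hplus' := hK.sfn_sq_div_two_add_inner_le (y + v) y
  have hminus' := hK.sfn_sq_div_two_add_inner_le (y - v) y
  have hlip : ⟪dualityMap K (y + v) - dualityMap K (y - v), v⟫_ℝ ≤ 2 * C * ‖v‖ ^ 2 :=
    calc ⟪dualityMap K (y + v) - dualityMap K (y - v), v⟫_ℝ
      _ ≤ C * ‖y + v - (y - v)‖ * ‖v‖ := (real_inner_le_norm _ _).trans (by gcongr; exact hC _ _)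
      _ = 2 * C * ‖v‖ ^ 2 := by
        rw [add_sub_sub_cancel, ← two_smul ℝ v, norm_smul, norm_two]
        ring
  simp only [add_sub_cancel_left, sub_sub_cancel_left, sub_add_cancel_left, sub_sub_cancel,
    inner_neg_right, inner_sub_left] at hplus hminus hplus' hminus' hlip
  rw [abs_le]
  constructor <;> linarith

theorem exists_abs_secondDiff_perturbedEnergy_le :
    ∃ C, ∀ y t, |secondDiff (perturbedEnergy K e ζ y) t| ≤ C * t ^ 2 := by
  obtain ⟨A, -, hA⟩ := hK.posHomogeneous_sfn.exists_norm_sub_le hK.sfn_zero fun z hz ↦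
    ((hK.contDiffAt_sfn hz).of_le (by norm_cast)).contDiffWithinAt
  obtain ⟨B, -, hB⟩ := hK.posHomogeneous_dualityMap.exists_norm_sub_le hK.dualityMap_zero
    fun z hz ↦ ((hK.contDiffAt_dualityMap hz).of_le (by norm_cast)).contDiffWithinAt
  refine ⟨2 * B * ‖e‖ ^ 2 + 2 * |ζ| * A * ‖e‖ + ζ ^ 2, fun y t ↦ ?_⟩
  have henergy := hK.abs_secondDiff_sfn_sq_div_two_le (y := y) hB (t • e)
  have hdiff : |t * ζ * (sfn K (y + t • e) - sfn K (y - t • e))| ≤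
      2 * |ζ| * A * ‖e‖ * t ^ 2 := by
    have hlip := hA (y + t • e) (y - t • e)
    rw [add_sub_sub_cancel, ← two_smul ℝ, norm_smul, norm_smul, norm_two, norm_eq_abs,
      norm_eq_abs] at hlip
    calc |t * ζ * (sfn K (y + t • e) - sfn K (y - t • e))|
      _ ≤ |t| * |ζ| * (A * (2 * (|t| * ‖e‖))) := by rw [abs_mul, abs_mul]; gcongr
      _ = 2 * |ζ| * A * ‖e‖ * t ^ 2 := by rw [← sq_abs t]; ring
  have hsplit : secondDiff (perturbedEnergy K e ζ y) t =
      sfn K (y + t • e) ^ 2 / 2 + sfn K (y - t • e) ^ 2 / 2 - sfn K y ^ 2 -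
        t * ζ * (sfn K (y + t • e) - sfn K (y - t • e)) + t ^ 2 * ζ ^ 2 := by
    simp only [secondDiff, perturbedEnergy, zero_smul, add_zero, zero_mul, sub_zero, neg_smul,
      ← sub_eq_add_neg]
    ring
  rw [norm_smul, norm_eq_abs, mul_pow, sq_abs] at henergy
  rw [abs_le] at henergy hdiff ⊢
  rw [hsplit]
  constructor <;> nlinarith

end IsSmoothConvexBody

section DualityGauss

variable {n : ℕ}

/-- The probability measure proportional to `exp (-h² / 2)` times `dualityMeas K`, where `h` is the
support function of `K`. -/
def dualityGauss (K : Set (Eu n)) : Measure (Eu n) :=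
  (dualityMeas K).tilted fun y ↦ -sfn K y ^ 2 / 2

theorem dualityGauss_absolutelyContinuous (K : Set (Eu n)) : dualityGauss K ≪ volume :=
  (tilted_absolutelyContinuous _ _).trans (withDensity_absolutelyContinuous _ _)

end DualityGauss

namespace IsSmoothConvexBody

open ProbabilityTheory

variable {n : ℕ} {K : Set (Eu n)} (hK : IsSmoothConvexBody K)

include hK

theorem integrable_exp_neg_sfn_sq_add {φ : Eu n → ℝ} (hφ : PosHomogeneous 1 φ)
    (hφ_zero : φ 0 = 0) :
    Integrable (fun y ↦ exp (-sfn K y ^ 2 / 2 + φ y)) (dualityMeas K) := by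
  obtain ⟨A, hA_nonneg, hA⟩ := hφ.exists_norm_le
  obtain ⟨C, -, hC⟩ := hK.exists_norm_le_mul_sfn
  have hle : ∀ y, φ y ≤ A * C * sfn K y := fun y ↦ by
    rcases eq_or_ne y 0 with rfl | hy
    · simp [hφ_zero, hK.sfn_zero]
    calc φ y ≤ A * ‖y‖ := by simpa using (le_norm_self _).trans (hA y hy)
      _ ≤ A * (C * sfn K y) := by gcongr; exact hC y
      _ = A * C * sfn K y := (mul_assoc _ _ _).symm
  have hdom := (hK.integrable_exp_neg_sq_mul_dualityMeas (N := fun y ↦ (√2)⁻¹ * sfn K y)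
    (hK.posHomogeneous_sfn.clm_comp (.lsmul ℝ ℝ (√2)⁻¹))
    (fun y hy ↦ mul_pos (by positivity) (hK.sfn_pos hy)) (.const 1)
    (by linarith [n.cast_nonneg (α := ℝ)])).const_mul (exp ((A * C) ^ 2))
  refine hdom.mono' (((hK.continuous_sfn.pow 2).neg.div_const 2).measurable.add
    hφ.measurable).exp.aestronglyMeasurable (.of_forall fun y ↦ ?_)
  have hsq : ((√2)⁻¹ * sfn K y) ^ 2 = sfn K y ^ 2 / 2 := by
    rw [mul_pow, inv_pow, sq_sqrt zero_le_two]
    ring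
  rw [norm_of_nonneg (exp_pos _).le, mul_one, ← exp_add, exp_le_exp, hsq]
  linarith [hle y, sq_nonneg (sfn K y / 2 - A * C)]

theorem integrable_exp_neg_sfn_sq :
    Integrable (fun y ↦ exp (-sfn K y ^ 2 / 2)) (dualityMeas K) := by
  simpa using hK.integrable_exp_neg_sfn_sq_add
    (PosHomogeneous.clm (0 : Eu n →L[ℝ] ℝ)) (map_zero _)

theorem dualityMeas_ne_zero : dualityMeas K ≠ 0 := fun h ↦ by
  have hmap := hK.measurePreserving_dualityMap.map_eq
  rw [h, Measure.map_zero] at hmap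
  exact NeZero.ne (volume : Measure (Eu n)) hmap.symm

theorem isProbabilityMeasure_dualityGauss : IsProbabilityMeasure (dualityGauss K) :=
  have : NeZero (dualityMeas K) := ⟨hK.dualityMeas_ne_zero⟩
  isProbabilityMeasure_tilted hK.integrable_exp_neg_sfn_sq

theorem integral_exp_neg_sfn_sq :
    ∫ y, exp (-sfn K y ^ 2 / 2) ∂dualityMeas K =
      gaussMoment n * ∫ x : Sph n, dens K x ∂sphMeas n := by
  simpa using hK.integral_exp_neg_sfn_sq_mul_dualityMeas (.const 1)
    (by linarith [n.cast_nonneg (α := ℝ)])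

theorem integral_dens_pos : 0 < ∫ x : Sph n, dens K x ∂sphMeas n := by
  have : NeZero (dualityMeas K) := ⟨hK.dualityMeas_ne_zero⟩
  have hpos := integral_exp_pos hK.integrable_exp_neg_sfn_sq
  rw [hK.integral_exp_neg_sfn_sq] at hpos
  exact pos_of_mul_pos_right hpos (gaussMoment_pos (by linarith [n.cast_nonneg (α := ℝ)])).le

theorem integral_dualityGauss {k : ℝ} {φ : Eu n → ℝ} (hφ : PosHomogeneous k φ)
    (hk : -1 < n + k) :
    ∫ y, φ y ∂dualityGauss K = gaussMoment (n + k) / gaussMoment n *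
      ((∫ x : Sph n, sfn K x ^ (-k) * φ x * dens K x ∂sphMeas n) /
        ∫ x : Sph n, dens K x ∂sphMeas n) := by
  simp_rw [dualityGauss, integral_tilted, smul_eq_mul, div_mul_eq_mul_div]
  rw [integral_div, hK.integral_exp_neg_sfn_sq_mul_dualityMeas hφ hk, hK.integral_exp_neg_sfn_sq,
    mul_div_mul_comm, mul_div_right_comm]

theorem dualityTilt_zero (e : Eu n) (ζ : ℝ) : dualityTilt K e ζ 0 = 0 := by
  simp [dualityTilt, hK.dualityMap_zero, hK.sfn_zero]

theorem measurable_secondDiff_perturbedEnergy (e : Eu n) (ζ t : ℝ) :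
    Measurable fun y ↦ secondDiff (perturbedEnergy K e ζ y) t := by
  have hsfn := hK.continuous_sfn
  simp only [secondDiff, perturbedEnergy]
  exact Continuous.measurable (by fun_prop)

theorem integrable_exp_add_dualityTilt (e : Eu n) (ζ t : ℝ) :
    Integrable (fun y ↦ exp (-sfn K y ^ 2 / 2 + t * dualityTilt K e ζ y)) (dualityMeas K) :=
  hK.integrable_exp_neg_sfn_sq_add
    ((hK.posHomogeneous_dualityTilt e ζ).clm_comp (.lsmul ℝ ℝ t))
    (by simp [hK.dualityTilt_zero])

theorem integrable_exp_add_secondDiff (e : Eu n) (ζ t : ℝ) :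
    Integrable (fun y ↦ exp (-sfn K y ^ 2 / 2 + secondDiff (perturbedEnergy K e ζ y) t / 2))
      (dualityMeas K) := by
  obtain ⟨C, hC⟩ := hK.exists_abs_secondDiff_perturbedEnergy_le e ζ
  simp_rw [exp_add, mul_comm (exp (-_ / _))]
  refine hK.integrable_exp_neg_sfn_sq.bdd_mul (c := exp (C * t ^ 2 / 2))
    ((hK.measurable_secondDiff_perturbedEnergy e ζ t).div_const 2).exp.aestronglyMeasurable
    (.of_forall fun y ↦ ?_)
  rw [norm_of_nonneg (exp_pos _).le, exp_le_exp]
  linarith [(le_abs_self _).trans (hC y t)]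

theorem mgf_dualityTilt_mul_mgf_neg_le (e : Eu n) (ζ t : ℝ) :
    mgf (dualityTilt K e ζ) (dualityGauss K) t * mgf (dualityTilt K e ζ) (dualityGauss K) (-t) ≤
      (∫ y, exp (secondDiff (perturbedEnergy K e ζ y) t / 2) ∂dualityGauss K) ^ 2 := by
  simp only [mgf, dualityGauss, integral_exp_tilted, Pi.add_apply]
  rw [div_mul_div_comm, ← sq, div_pow]
  have hsfn : Measurable fun y ↦ -sfn K y ^ 2 / 2 :=
    ((hK.continuous_sfn.pow 2).neg.div_const 2).measurable
  have htilt := (hK.posHomogeneous_dualityTilt e ζ).measurable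
  exact div_le_div_of_nonneg_right (hK.integral_exp_mul_integral_exp_dualityMeas_le_sq
    (hsfn.add (htilt.const_mul t)) (hsfn.add (htilt.const_mul (-t)))
    (hsfn.add ((hK.measurable_secondDiff_perturbedEnergy e ζ t).div_const 2))
    (hK.integrable_exp_add_dualityTilt e ζ t) (hK.integrable_exp_add_dualityTilt e ζ (-t))
    (hK.integrable_exp_add_secondDiff e ζ t)
    fun y₁ y₂ y hy ↦ hK.dualityTilt_midpoint_le e ζ hy t) (sq_nonneg _)

theorem variance_dualityTilt_le (e : Eu n) (ζ : ℝ) :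
    Var[dualityTilt K e ζ; dualityGauss K] ≤
      ∫ y, ((⟪e, gradient (sfn K) y⟫_ℝ - ζ) ^ 2 + sfn K y * ⟪e, hessA K y e⟫_ℝ)
        ∂dualityGauss K := by
  have := hK.isProbabilityMeasure_dualityGauss
  obtain ⟨C, hC⟩ := hK.exists_abs_secondDiff_perturbedEnergy_le e ζ
  have hne : ∀ᵐ y ∂dualityGauss K, y ≠ 0 :=
    (dualityGauss_absolutelyContinuous K).ae_le (Measure.ae_ne volume 0)
  refine (variance_le_integral_of_mgf_mul_mgf_neg_le_sq (C := C / 2)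
    (fun t ↦ ?_)
    (fun t ↦ ((hK.measurable_secondDiff_perturbedEnergy e ζ t).div_const 2).aestronglyMeasurable)
    (fun t y ↦ ?_)
    (hne.mono fun y hy ↦ by
      simpa only [div_right_comm] using
        (hK.tendsto_secondDiff_perturbedEnergy e ζ hy).div_const 2)
    (hK.mgf_dualityTilt_mul_mgf_neg_le e ζ)).trans_eq ?_
  · rw [dualityGauss, integrable_tilted_iff hK.integrable_exp_neg_sfn_sq]
    simpa only [smul_eq_mul, exp_add] using hK.integrable_exp_add_dualityTilt e ζ t
  · rw [abs_div, abs_two]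
    linarith [hC y t]
  · rw [integral_div, mul_div_cancel₀ _ two_ne_zero]

theorem integral_dualityTilt_dualityGauss (e : Eu n) {ζ : ℝ}
    (hζ : ∫ x : Sph n, (⟪e, gradient (sfn K) x⟫_ℝ - ζ) * dens K x ∂sphMeas n = 0) :
    ∫ y, dualityTilt K e ζ y ∂dualityGauss K = 0 := by
  rw [hK.integral_dualityGauss (hK.posHomogeneous_dualityTilt e ζ)
    (by linarith [n.cast_nonneg (α := ℝ)])]
  convert! mul_zero _
  rw [div_eq_zero_iff, ← hζ]
  left
  congr! 3 with x
  rw [dualityTilt, dualityMap, real_inner_smul_right, mul_comm ζ, ← mul_sub, rpow_neg_one,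
    inv_mul_cancel_left₀ (hK.pos x).ne']

theorem variance_dualityTilt (e : Eu n) {ζ : ℝ}
    (hζ : ∫ x : Sph n, (⟪e, gradient (sfn K) x⟫_ℝ - ζ) * dens K x ∂sphMeas n = 0) :
    Var[dualityTilt K e ζ; dualityGauss K] = (n + 1) *
      ((∫ x : Sph n, (⟪e, gradient (sfn K) x⟫_ℝ - ζ) ^ 2 * dens K x ∂sphMeas n) /
        ∫ x : Sph n, dens K x ∂sphMeas n) := by
  have htilt := hK.posHomogeneous_dualityTilt e ζ
  have hn : (-1 : ℝ) < n := by linarith [n.cast_nonneg (α := ℝ)]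
  rw [variance_of_integral_eq_zero htilt.measurable.aemeasurable
    (hK.integral_dualityTilt_dualityGauss e hζ),
    hK.integral_dualityGauss (htilt.pow 2) (by push_cast; linarith), Nat.cast_two, one_mul,
    gaussMoment_add_two hn, mul_div_cancel_right₀ _ (gaussMoment_pos hn).ne']
  congr! 5 with x
  have hsfn := hK.pos x
  rw [dualityTilt, dualityMap, real_inner_smul_right, rpow_neg hsfn.le, rpow_two]
  field_simp

theorem add_one_mul_integral_sq_le (e : Eu n) {ζ : ℝ}
    (hζ : ∫ x : Sph n, (⟪e, gradient (sfn K) x⟫_ℝ - ζ) * dens K x ∂sphMeas n = 0) :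
    (n + 1) * ∫ x : Sph n, (⟪e, gradient (sfn K) x⟫_ℝ - ζ) ^ 2 * dens K x ∂sphMeas n ≤
      ∫ x : Sph n, ((⟪e, gradient (sfn K) x⟫_ℝ - ζ) ^ 2 + sfn K x * ⟪e, hessA K x e⟫_ℝ) *
        dens K x ∂sphMeas n := by
  have hn : (-1 : ℝ) < n := by linarith [n.cast_nonneg (α := ℝ)]
  have hsq := ((hK.posHomogeneous_gradient.clm_comp (innerSL ℝ e)).sub (.const ζ)).pow 2
  have hhess := hK.posHomogeneous_sfn.mul
    ((hK.posHomogeneous_hessA.clm_apply e).clm_comp (innerSL ℝ e))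
  rw [zero_mul] at hsq
  rw [add_neg_cancel] at hhess
  have hvar := hK.variance_dualityTilt_le e ζ
  rw [hK.variance_dualityTilt e hζ, ← mul_div_assoc] at hvar
  have hrhs := hK.integral_dualityGauss (hsq.add hhess) (by rwa [add_zero])
  simp only [innerSL_apply_apply, add_zero, neg_zero, rpow_zero, one_mul,
    div_self (gaussMoment_pos hn).ne'] at hrhs
  rwa [hrhs, div_le_div_iff_of_pos_right hK.integral_dens_pos] at hvar

end IsSmoothConvexBody

section ConstantOnSphere

variable {n : ℕ}

theorem PosHomogeneous.eq_of_fderiv_sphere_eq_zero {F : Type*} [NormedAddCommGroup F]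
    [NormedSpace ℝ F] {g : Eu n → F} (hn : 1 ≤ n) (hg : PosHomogeneous 0 g)
    (hg_diff : ContDiffOn ℝ 1 g {0}ᶜ) (hg_fderiv : ∀ x : Sph n, _root_.fderiv ℝ g x = 0)
    (x y : Sph n) : g x = g y := by
  have hconn : IsPreconnected ({0}ᶜ : Set (Eu n)) := by
    refine (isConnected_compl_singleton_of_one_lt_rank ?_ 0).isPreconnected
    rw [← Module.finrank_eq_rank, finrank_euclideanSpace_fin]
    exact_mod_cast Nat.lt_succ_of_le hn
  refine isOpen_compl_singleton.is_const_of_fderiv_eq_zero hconn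
    (hg_diff.differentiableOn one_ne_zero) (fun z hz ↦ ?_) (ne_zero_of_mem_unit_sphere x)
    (ne_zero_of_mem_unit_sphere y)
  have hz' : ‖z‖⁻¹ • z ∈ sphere (0 : Eu n) 1 := by simp [norm_smul, norm_ne_zero_iff.2 hz]
  rw [(hg.fderiv hg_diff).eq_norm_rpow_smul hz, hg_fderiv ⟨_, hz'⟩, smul_zero, Pi.zero_apply]

theorem PosHomogeneous.eq_of_fderiv_sphere_eq {k : ℝ} {f : Eu n → ℝ} (hn : 1 ≤ n)
    (hf : PosHomogeneous k f) (hf_diff : ContDiffOn ℝ 1 f {0}ᶜ)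
    (hf_fderiv : ∀ x : Sph n, _root_.fderiv ℝ f x = (k * f x) • innerSL ℝ (x : Eu n))
    (x y : Sph n) : f x = f y := by
  have hsq_pos : ∀ y : Eu n, y ≠ 0 → 0 < ‖y‖ ^ 2 := fun y hy ↦ pow_pos (norm_pos_iff.2 hy) 2
  have hg : PosHomogeneous 0 fun y ↦ (‖y‖ ^ 2) ^ (-k / 2) * f y := by
    have := (PosHomogeneous.norm_sq.rpow_const hsq_pos (-k / 2)).mul hf
    rwa [show 2 * (-k / 2) + k = 0 by ring] at this
  have hconst := hg.eq_of_fderiv_sphere_eq_zero hn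
    (((contDiff_norm_sq ℝ).contDiffOn.rpow_const_of_ne fun y hy ↦ (hsq_pos y hy).ne').mul hf_diff)
    (fun z ↦ ?_) x y
  · simpa using hconst
  · have hz : ‖(z : Eu n)‖ = 1 := norm_eq_of_mem_sphere z
    have hsq' := (hasStrictFDerivAt_norm_sq (z : Eu n)).hasFDerivAt
    have hf' := ((hf_diff.contDiffAt (isOpen_compl_singleton.mem_nhds
      (ne_zero_of_mem_unit_sphere z))).differentiableAt one_ne_zero).hasFDerivAt
    rw [((hsq'.rpow_const (p := -k / 2) (.inl (by simp [hz]))).fun_mul hf').fderiv, hf_fderiv]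
    ext v
    simp [hz]
    ring

end ConstantOnSphere

namespace IsSmoothConvexBody

variable {n : ℕ} {K : Set (Eu n)} (hK : IsSmoothConvexBody K)

include hK

theorem posHomogeneous_sfn_rpow (q : ℝ) : PosHomogeneous q fun y ↦ sfn K y ^ q := by
  simpa only [one_mul] using hK.posHomogeneous_sfn.rpow_const (fun _ ↦ hK.sfn_pos) q

theorem posHomogeneous_inner_gradient (e : Eu n) :
    PosHomogeneous 0 fun y ↦ ⟪e, gradient (sfn K) y⟫_ℝ :=
  hK.posHomogeneous_gradient.clm_comp (innerSL ℝ e)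

theorem integral_sfn_rpow_pos (q : ℝ) : 0 < ∫ x : Sph n, sfn K x ^ q ∂sphMeas n :=
  (hK.posHomogeneous_sfn_rpow q).continuous_sphere.integral_pos_of_hasCompactSupport_nonneg_nonzero
    (.of_compactSpace _) (fun x ↦ (rpow_pos_of_pos (hK.pos x) q).le)
    (x := ⟨EuclideanSpace.single 0 1, by simp⟩) (rpow_pos_of_pos (hK.pos _) q).ne'

theorem integral_inner_gradient_mul {p : ℝ} {c : Eu n}
    (hc : ∫ x : Sph n, sfn K x ^ p • gradient (sfn K) x ∂sphMeas n =
      (∫ x : Sph n, sfn K x ^ p ∂sphMeas n) • c) (e : Eu n) :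
    ∫ x : Sph n, ⟪e, gradient (sfn K) x⟫_ℝ * sfn K x ^ p ∂sphMeas n =
      ⟪e, c⟫_ℝ * ∫ x : Sph n, sfn K x ^ p ∂sphMeas n := by
  have hint := integral_inner (𝕜 := ℝ)
    ((hK.posHomogeneous_sfn_rpow p).smul hK.posHomogeneous_gradient).integrable_sphMeas e
  rw [hc, real_inner_smul_right, mul_comm] at hint
  simpa only [real_inner_smul_right, mul_comm] using hint

theorem integral_fderiv_mul_add_integral_inner_gradient_mul {k q : ℝ} {φ : Eu n → ℝ}
    (hφ : PosHomogeneous k φ) (hφ_diff : ContDiffOn ℝ 1 φ {0}ᶜ) (e : Eu n) :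
    ∫ x : Sph n, fderiv ℝ φ x e * sfn K x ^ q ∂sphMeas n +
        q * ∫ x : Sph n, φ x * ⟪e, gradient (sfn K) x⟫_ℝ * sfn K x ^ (q - 1) ∂sphMeas n =
      (n + k + q) * ∫ x : Sph n, ⟪e, (x : Eu n)⟫_ℝ * φ x * sfn K x ^ q ∂sphMeas n := by
  have hpow := hK.posHomogeneous_sfn_rpow q
  have hpow_diff : ContDiffOn ℝ 1 (fun y ↦ sfn K y ^ q) {0}ᶜ :=
    (hK.smooth.of_le (by norm_cast)).rpow_const_of_ne fun y hy ↦ (hK.sfn_pos hy).ne'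
  have hderiv : ∀ x : Sph n, fderiv ℝ (fun y ↦ φ y * sfn K y ^ q) x e =
      fderiv ℝ φ x e * sfn K x ^ q +
        q * (φ x * ⟪e, gradient (sfn K) x⟫_ℝ * sfn K x ^ (q - 1)) := fun x ↦ by
    have hx := ne_zero_of_mem_unit_sphere x
    have hφ_x := ((hφ_diff.contDiffAt (isOpen_compl_singleton.mem_nhds hx)).differentiableAt
      one_ne_zero).hasFDerivAt
    rw [(hφ_x.fun_mul ((hK.hasFDerivAt_sfn hx).rpow_const (p := q)
      (.inl (hK.sfn_pos hx).ne'))).fderiv]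
    simp
    ring
  have hdiv := integral_fderiv_apply_sphMeas (hφ.mul hpow) (hφ_diff.mul hpow_diff) e
  simp only [hderiv] at hdiv
  rw [integral_add, integral_const_mul] at hdiv
  · simpa only [← add_assoc, ← mul_assoc, real_inner_comm e] using hdiv
  · exact (((hφ.fderiv hφ_diff).clm_apply e).mul hpow).integrable_sphMeas
  · exact (((hφ.mul (hK.posHomogeneous_inner_gradient e)).mul
      (hK.posHomogeneous_sfn_rpow (q - 1))).integrable_sphMeas).const_mul q

theorem integral_inner_mul_sfn_rpow_add_one (p : ℝ) (e : Eu n) :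
    (n + 1 + p) * ∫ x : Sph n, ⟪e, (x : Eu n)⟫_ℝ * sfn K x ^ (p + 1) ∂sphMeas n =
      (p + 1) * ∫ x : Sph n, ⟪e, gradient (sfn K) x⟫_ℝ * sfn K x ^ p ∂sphMeas n := by
  have hdiv := hK.integral_fderiv_mul_add_integral_inner_gradient_mul (q := p + 1)
    (.const (1 : ℝ)) contDiffOn_const e
  simp only [fderiv_const_apply, zero_apply, zero_mul, integral_zero, zero_add, one_mul,
    add_sub_cancel_right, mul_one, add_zero] at hdiv
  rw [hdiv]
  ring

theorem integral_inner_hessA_mul_add (p : ℝ) (e : Eu n) :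
    ∫ x : Sph n, ⟪e, hessA K x e⟫_ℝ * sfn K x ^ (p + 1) ∂sphMeas n +
        (p + 1) * ∫ x : Sph n, ⟪e, gradient (sfn K) x⟫_ℝ ^ 2 * sfn K x ^ p ∂sphMeas n =
      (n + 1 + p) * ∫ x : Sph n, ⟪e, (x : Eu n)⟫_ℝ * ⟪e, gradient (sfn K) x⟫_ℝ *
        sfn K x ^ (p + 1) ∂sphMeas n := by
  have hderiv : ∀ x : Sph n,
      fderiv ℝ (fun y ↦ ⟪e, gradient (sfn K) y⟫_ℝ) x e = ⟪e, hessA K x e⟫_ℝ := fun x ↦ by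
    simp_rw [real_inner_comm _ e,
      (hK.hasFDerivAt_inner_gradient (ne_zero_of_mem_unit_sphere x) e).fderiv]
    simp [real_inner_comm]
  have hdiv := hK.integral_fderiv_mul_add_integral_inner_gradient_mul (q := p + 1)
    (hK.posHomogeneous_inner_gradient e) (fun z hz ↦
      (contDiffAt_const.inner ℝ
        ((hK.contDiffAt_gradient hz).of_le (by norm_cast))).contDiffWithinAt) e
  simp only [hderiv, add_sub_cancel_right, ← sq] at hdiv
  rw [hdiv]
  ring

theorem integral_inner_sq_mul_sfn_rpow {p : ℝ} (hp : n + 1 + p ≠ 0)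
    (hdens : ∀ x : Sph n, dens K x = sfn K x ^ p) (e : Eu n) :
    (n + 1) * ∫ x : Sph n, ⟪e, (x : Eu n)⟫_ℝ ^ 2 * sfn K x ^ p ∂sphMeas n =
      ‖e‖ ^ 2 * ∫ x : Sph n, sfn K x ^ p ∂sphMeas n := by
  have hdiv := hK.integral_fderiv_mul_add_integral_inner_gradient_mul (q := p)
    (posHomogeneous_inner e) (innerSL ℝ e).contDiff.contDiffOn e
  have hderiv : ∀ x : Sph n, fderiv ℝ (fun y ↦ ⟪e, y⟫_ℝ) x e = ‖e‖ ^ 2 := fun x ↦ by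
    rw [(hasFDerivAt_inner_right e x).fderiv, innerSL_apply_apply, real_inner_self_eq_norm_sq]
  simp only [hderiv, integral_const_mul, ← sq] at hdiv
  have hcentroid := hK.norm_sq_mul_integral_dens e
  simp only [hdens] at hcentroid
  have hquot : ∀ x : Sph n,
      ⟪e, gradient (sfn K) x⟫_ℝ * ⟪e, (x : Eu n)⟫_ℝ / sfn K x * sfn K x ^ p =
        ⟪e, (x : Eu n)⟫_ℝ * ⟪e, gradient (sfn K) x⟫_ℝ * sfn K x ^ (p - 1) := fun x ↦ by
    rw [rpow_sub_one (hK.pos x).ne']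
    ring
  simp only [hquot] at hcentroid
  refine mul_left_cancel₀ hp ?_
  linear_combination -(n + 1 : ℝ) * hdiv - p * hcentroid

theorem integral_inner_gradient_sub_sq {p : ℝ} {c : Eu n}
    (hc : ∫ x : Sph n, sfn K x ^ p • gradient (sfn K) x ∂sphMeas n =
      (∫ x : Sph n, sfn K x ^ p ∂sphMeas n) • c) (e : Eu n) :
    ∫ x : Sph n, (⟪e, gradient (sfn K) x⟫_ℝ - ⟪e, c⟫_ℝ) ^ 2 * sfn K x ^ p ∂sphMeas n =
      ∫ x : Sph n, ⟪e, gradient (sfn K) x⟫_ℝ ^ 2 * sfn K x ^ p ∂sphMeas n -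
        ⟪e, c⟫_ℝ ^ 2 * ∫ x : Sph n, sfn K x ^ p ∂sphMeas n := by
  have hgrad := hK.posHomogeneous_inner_gradient e
  have hpow := hK.posHomogeneous_sfn_rpow p
  have hexpand : ∀ x : Sph n,
      (⟪e, gradient (sfn K) x⟫_ℝ - ⟪e, c⟫_ℝ) ^ 2 * sfn K x ^ p =
        ⟪e, gradient (sfn K) x⟫_ℝ ^ 2 * sfn K x ^ p -
          2 * ⟪e, c⟫_ℝ * (⟪e, gradient (sfn K) x⟫_ℝ * sfn K x ^ p) +
          ⟪e, c⟫_ℝ ^ 2 * sfn K x ^ p := fun x ↦ by ring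
  have hsq_int := ((hgrad.pow 2).mul hpow).integrable_sphMeas
  have hgrad_int := ((hgrad.mul hpow).integrable_sphMeas).const_mul (2 * ⟪e, c⟫_ℝ)
  simp only [hexpand]
  rw [integral_add (by exact hsq_int.sub hgrad_int) (hpow.integrable_sphMeas.const_mul _),
    integral_sub hsq_int hgrad_int, integral_const_mul, integral_const_mul,
    hK.integral_inner_gradient_mul hc]
  ring

theorem integral_inner_gradient_sq_sub_le {p : ℝ} {c : Eu n} (hp : 0 < n + 1 + p)
    (hdens : ∀ x : Sph n, dens K x = sfn K x ^ p)
    (hc : ∫ x : Sph n, sfn K x ^ p • gradient (sfn K) x ∂sphMeas n =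
      (∫ x : Sph n, sfn K x ^ p ∂sphMeas n) • c) (e : Eu n) :
    ∫ x : Sph n, (⟪e, gradient (sfn K) x⟫_ℝ ^ 2 * sfn K x ^ p -
        ⟪e, (x : Eu n)⟫_ℝ * ⟪e, gradient (sfn K) x⟫_ℝ * sfn K x ^ (p + 1)) ∂sphMeas n ≤
      n / (n + 1 + p) * ⟪e, c⟫_ℝ ^ 2 * ∫ x : Sph n, sfn K x ^ p ∂sphMeas n := by
  have hgrad := hK.posHomogeneous_inner_gradient e
  have hpow := hK.posHomogeneous_sfn_rpow
  have hhess : PosHomogeneous (-1) fun x ↦ ⟪e, hessA K x e⟫_ℝ :=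
    (hK.posHomogeneous_hessA.clm_apply e).clm_comp (innerSL ℝ e)
  have hmean : ∫ x : Sph n, (⟪e, gradient (sfn K) x⟫_ℝ - ⟪e, c⟫_ℝ) * dens K x ∂sphMeas n = 0 := by
    simp only [hdens, sub_mul]
    rw [integral_sub (hgrad.mul (hpow p)).integrable_sphMeas
      ((hpow p).integrable_sphMeas.const_mul _), integral_const_mul,
      hK.integral_inner_gradient_mul hc, sub_self]
  have hpoincare := hK.add_one_mul_integral_sq_le e hmean
  have hsplit : ∀ x : Sph n,
      ((⟪e, gradient (sfn K) x⟫_ℝ - ⟪e, c⟫_ℝ) ^ 2 + sfn K x * ⟪e, hessA K x e⟫_ℝ) * dens K x =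
        (⟪e, gradient (sfn K) x⟫_ℝ - ⟪e, c⟫_ℝ) ^ 2 * sfn K x ^ p +
          ⟪e, hessA K x e⟫_ℝ * sfn K x ^ (p + 1) := fun x ↦ by
    rw [hdens, rpow_add_one (hK.pos x).ne']
    ring
  simp only [hsplit] at hpoincare
  simp only [hdens] at hpoincare
  rw [integral_add (((hgrad.sub (.const _)).pow 2).mul (hpow p)).integrable_sphMeas
    (hhess.mul (hpow (p + 1))).integrable_sphMeas, hK.integral_inner_gradient_sub_sq hc]
    at hpoincare
  rw [integral_sub ((hgrad.pow 2).mul (hpow p)).integrable_sphMeas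
    (((posHomogeneous_inner e).mul hgrad).mul (hpow (p + 1))).integrable_sphMeas,
    div_mul_eq_mul_div, div_mul_eq_mul_div, le_div_iff₀ hp]
  linarith [hK.integral_inner_hessA_mul_add p e]

theorem integral_norm_gradient_sq_sub_le {p : ℝ} {c : Eu n} (hp : 0 < n + 1 + p)
    (hdens : ∀ x : Sph n, dens K x = sfn K x ^ p)
    (hc : ∫ x : Sph n, sfn K x ^ p • gradient (sfn K) x ∂sphMeas n =
      (∫ x : Sph n, sfn K x ^ p ∂sphMeas n) • c) :
    ∫ x : Sph n, (‖gradient (sfn K) x‖ ^ 2 - sfn K x ^ 2) * sfn K x ^ p ∂sphMeas n ≤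
      n / (n + 1 + p) * ‖c‖ ^ 2 * ∫ x : Sph n, sfn K x ^ p ∂sphMeas n := by
  let b := EuclideanSpace.basisFun (Fin (n + 1)) ℝ
  have hsum := Finset.sum_le_sum (s := Finset.univ) fun i _ ↦
    hK.integral_inner_gradient_sq_sub_le hp hdens hc (b i)
  rw [← integral_finsetSum, ← Finset.sum_mul, ← Finset.mul_sum, b.sum_sq_inner_right] at hsum
  · refine (integral_congr_ae (.of_forall fun x ↦ ?_)).trans_le hsum
    have hself := b.sum_inner_mul_inner (x : Eu n) (gradient (sfn K) x)
    rw [real_inner_comm, hK.inner_gradient_self (ne_zero_of_mem_unit_sphere x)] at hself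
    simp only [Finset.sum_sub_distrib, ← Finset.sum_mul, b.sum_sq_inner_right,
      real_inner_comm (x : Eu n), hself]
    rw [rpow_add_one (hK.pos x).ne']
    ring
  · have hgrad := hK.posHomogeneous_inner_gradient
    have hpow := hK.posHomogeneous_sfn_rpow
    exact fun i _ ↦ (((hgrad (b i)).pow 2).mul (hpow p)).integrable_sphMeas.sub
      (((posHomogeneous_inner (b i)).mul (hgrad (b i))).mul
        (hpow (p + 1))).integrable_sphMeas

theorem integral_norm_gradient_sub_sq_sub {p : ℝ} {c : Eu n}
    (hc : ∫ x : Sph n, sfn K x ^ p • gradient (sfn K) x ∂sphMeas n =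
      (∫ x : Sph n, sfn K x ^ p ∂sphMeas n) • c) :
    ∫ x : Sph n, (‖gradient (sfn K) x - c‖ ^ 2 - (sfn K x - ⟪(x : Eu n), c⟫_ℝ) ^ 2) *
        sfn K x ^ p ∂sphMeas n =
      ∫ x : Sph n, (‖gradient (sfn K) x‖ ^ 2 - sfn K x ^ 2) * sfn K x ^ p ∂sphMeas n -
        ‖c‖ ^ 2 * ∫ x : Sph n, sfn K x ^ p ∂sphMeas n +
        2 * ∫ x : Sph n, ⟪c, (x : Eu n)⟫_ℝ * sfn K x ^ (p + 1) ∂sphMeas n -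
        ∫ x : Sph n, ⟪c, (x : Eu n)⟫_ℝ ^ 2 * sfn K x ^ p ∂sphMeas n := by
  have hexpand : ∀ x : Sph n,
      (‖gradient (sfn K) x - c‖ ^ 2 - (sfn K x - ⟪(x : Eu n), c⟫_ℝ) ^ 2) * sfn K x ^ p =
        (‖gradient (sfn K) x‖ ^ 2 - sfn K x ^ 2) * sfn K x ^ p -
          2 * (⟪c, gradient (sfn K) x⟫_ℝ * sfn K x ^ p) + ‖c‖ ^ 2 * sfn K x ^ p +
          2 * (⟪c, (x : Eu n)⟫_ℝ * sfn K x ^ (p + 1)) -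
          ⟪c, (x : Eu n)⟫_ℝ ^ 2 * sfn K x ^ p := fun x ↦ by
    rw [norm_sub_sq_real, real_inner_comm c (x : Eu n), real_inner_comm c (gradient _ _),
      rpow_add_one (hK.pos x).ne']
    ring
  have hpow := hK.posHomogeneous_sfn_rpow
  have hinner := posHomogeneous_inner c
  have hint_norm : Integrable (fun x : Sph n ↦ (‖gradient (sfn K) x‖ ^ 2 - sfn K x ^ 2) *
      sfn K x ^ p) (sphMeas n) :=
    integrable_sphMeas_of_continuous
      (((hK.posHomogeneous_gradient.continuous_sphere.norm.pow 2).sub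
        (hK.posHomogeneous_sfn.continuous_sphere.pow 2)).mul (hpow p).continuous_sphere)
  have hgrad := hK.posHomogeneous_inner_gradient c
  have hint_grad := (hgrad.mul (hpow p)).integrable_sphMeas.const_mul 2
  have hint_one := (hpow p).integrable_sphMeas.const_mul (‖c‖ ^ 2)
  have hint_inner := (hinner.mul (hpow (p + 1))).integrable_sphMeas.const_mul 2
  have hint_sq := ((hinner.pow 2).mul (hpow p)).integrable_sphMeas
  simp only [hexpand]
  rw [integral_sub (by exact ((hint_norm.sub hint_grad).add hint_one).add hint_inner) hint_sq,
    integral_add (by exact (hint_norm.sub hint_grad).add hint_one) hint_inner,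
    integral_add (by exact hint_norm.sub hint_grad) hint_one, integral_sub hint_norm hint_grad]
  simp only [integral_const_mul, hK.integral_inner_gradient_mul hc, real_inner_self_eq_norm_sq]
  ring

theorem integral_norm_gradient_sub_sq_sub_le {p : ℝ} {c : Eu n} (hp : 0 < n + 1 + p)
    (hdens : ∀ x : Sph n, dens K x = sfn K x ^ p)
    (hc : ∫ x : Sph n, sfn K x ^ p • gradient (sfn K) x ∂sphMeas n =
      (∫ x : Sph n, sfn K x ^ p ∂sphMeas n) • c) :
    ∫ x : Sph n, (‖gradient (sfn K) x - c‖ ^ 2 - (sfn K x - ⟪(x : Eu n), c⟫_ℝ) ^ 2) *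
        sfn K x ^ p ∂sphMeas n ≤
      n * p * ‖c‖ ^ 2 / ((n + 1) * (n + 1 + p)) * ∫ x : Sph n, sfn K x ^ p ∂sphMeas n := by
  have hnorm := hK.integral_norm_gradient_sq_sub_le hp hdens hc
  have hfirst := hK.integral_inner_mul_sfn_rpow_add_one p c
  have hsecond := hK.integral_inner_sq_mul_sfn_rpow hp.ne' hdens c
  rw [hK.integral_inner_gradient_mul hc, real_inner_self_eq_norm_sq] at hfirst
  rw [hK.integral_norm_gradient_sub_sq_sub hc,
    eq_div_of_mul_eq hp.ne' ((mul_comm _ _).trans hfirst),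
    eq_div_of_mul_eq n.cast_add_one_ne_zero ((mul_comm _ _).trans hsecond)]
  set V := ∫ x : Sph n, sfn K x ^ p ∂sphMeas n
  have hcollect : n * p * ‖c‖ ^ 2 / ((n + 1) * (n + 1 + p)) * V =
      n / (n + 1 + p) * ‖c‖ ^ 2 * V - ‖c‖ ^ 2 * V +
        2 * ((p + 1) * (‖c‖ ^ 2 * V) / (n + 1 + p)) - ‖c‖ ^ 2 * V / (n + 1) := by
    field_simp
    ring
  linarith

theorem norm_gradient_sub_sub_smul_sq (c : Eu n) (x : Sph n) :
    ‖gradient (sfn K) x - c - (sfn K x - ⟪(x : Eu n), c⟫_ℝ) • (x : Eu n)‖ ^ 2 =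
      ‖gradient (sfn K) x - c‖ ^ 2 - (sfn K x - ⟪(x : Eu n), c⟫_ℝ) ^ 2 := by
  have hradial : ⟪gradient (sfn K) x - c, (x : Eu n)⟫_ℝ = sfn K x - ⟪(x : Eu n), c⟫_ℝ := by
    rw [inner_sub_left, hK.inner_gradient_self (ne_zero_of_mem_unit_sphere x), real_inner_comm c]
  rw [norm_sub_sq_real, real_inner_smul_right, hradial, norm_smul, norm_eq_of_mem_sphere, mul_one,
    Real.norm_eq_abs, sq_abs]
  ring

theorem gradient_sub_eq_smul_of_integral_nonpos {p : ℝ} {c : Eu n}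
    (hle : ∫ x : Sph n, (‖gradient (sfn K) x - c‖ ^ 2 - (sfn K x - ⟪(x : Eu n), c⟫_ℝ) ^ 2) *
      sfn K x ^ p ∂sphMeas n ≤ 0) (x : Sph n) :
    gradient (sfn K) x - c = (sfn K x - ⟪(x : Eu n), c⟫_ℝ) • (x : Eu n) := by
  simp only [← hK.norm_gradient_sub_sub_smul_sq] at hle
  have hcont : Continuous fun x : Sph n ↦
      ‖gradient (sfn K) x - c - (sfn K x - ⟪(x : Eu n), c⟫_ℝ) • (x : Eu n)‖ ^ 2 *
        sfn K x ^ p := by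
    have := hK.posHomogeneous_gradient.continuous_sphere
    have := hK.posHomogeneous_sfn.continuous_sphere
    have := (hK.posHomogeneous_sfn_rpow p).continuous_sphere
    fun_prop
  have hpow : ∀ x : Sph n, 0 < sfn K x ^ p := fun x ↦ rpow_pos_of_pos (hK.pos x) p
  by_contra hx
  refine hle.not_gt (hcont.integral_pos_of_hasCompactSupport_nonneg_nonzero (.of_compactSpace _)
    (fun x ↦ mul_nonneg (sq_nonneg _) (hpow x).le) (x := x) (mul_ne_zero ?_ (hpow x).ne'))
  exact pow_ne_zero 2 (norm_ne_zero_iff.2 (sub_ne_zero.2 hx))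

theorem sfn_sub_inner_eq_of_gradient_sub_eq_smul (hn : 1 ≤ n) {c : Eu n}
    (hgrad : ∀ x : Sph n,
      gradient (sfn K) x - c = (sfn K x - ⟪(x : Eu n), c⟫_ℝ) • (x : Eu n)) (x y : Sph n) :
    sfn K x - ⟪(x : Eu n), c⟫_ℝ = sfn K y - ⟪(y : Eu n), c⟫_ℝ := by
  have hdiff : ContDiffOn ℝ 1 (fun y ↦ sfn K y - ⟪c, y⟫_ℝ) {0}ᶜ :=
    (hK.smooth.of_le (by norm_cast)).sub (innerSL ℝ c).contDiff.contDiffOn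
  simp only [real_inner_comm c] at hgrad ⊢
  refine (hK.posHomogeneous_sfn.sub (posHomogeneous_inner c)).eq_of_fderiv_sphere_eq hn hdiff
    (fun z ↦ ?_) x y
  rw [((hK.hasFDerivAt_sfn (ne_zero_of_mem_unit_sphere z)).fun_sub
    (hasFDerivAt_inner_right c z)).fderiv, ← map_sub, hgrad, map_smul, one_mul]

end IsSmoothConvexBody

/-- For `p ∈ (−n−1, 0]` and `dV = h^p dθ`:
`∫ |∇̄h̃|² dV ≤ (np|c|²/((n+1)(n+1+p))) ∫ dV`; in particular `h̃` is constant on `S^n`. -/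
theorem tilde_support_constant (n : ℕ) (hn : 1 ≤ n) (p : ℝ)
    (hp : p ∈ Set.Ioc (-(n : ℝ) - 1) 0)
    (K : Set (Eu n)) (hK : IsSmoothConvexBody K)
    (heq : ∀ x : Sph n, rK K (x : Eu n) = sfn K (x : Eu n) ^ (p - 1))
    (c : Eu n)
    (hc : c = (∫ x : Sph n, sfn K (x : Eu n) ^ p ∂sphMeas n)⁻¹ •
        ∫ x : Sph n, sfn K (x : Eu n) ^ p • gradient (sfn K) (x : Eu n) ∂sphMeas n) :
    (∫ x : Sph n, (‖gradient (sfn K) (x : Eu n) - c‖ ^ 2 -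
          (sfn K (x : Eu n) - ⟪(x : Eu n), c⟫_ℝ) ^ 2) * sfn K (x : Eu n) ^ p ∂sphMeas n ≤
        (n : ℝ) * p * ‖c‖ ^ 2 / (((n : ℝ) + 1) * ((n : ℝ) + 1 + p)) *
          ∫ x : Sph n, sfn K (x : Eu n) ^ p ∂sphMeas n) ∧
      ∀ x y : Sph n,
        sfn K (x : Eu n) - ⟪(x : Eu n), c⟫_ℝ = sfn K (y : Eu n) - ⟪(y : Eu n), c⟫_ℝ := by
  have hp' : 0 < n + 1 + p := by linarith [hp.1]
  have hdens : ∀ x : Sph n, dens K x = sfn K x ^ p := fun x ↦ by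
    rw [dens, heq, rpow_sub_one (hK.pos x).ne', mul_div_cancel₀ _ (hK.pos x).ne']
  have hV := hK.integral_sfn_rpow_pos p
  have hcentroid := ((eq_inv_smul_iff₀ hV.ne').1 hc).symm
  have hbound := hK.integral_norm_gradient_sub_sq_sub_le hp' hdens hcentroid
  refine ⟨hbound, hK.sfn_sub_inner_eq_of_gradient_sub_eq_smul hn
    (hK.gradient_sub_eq_smul_of_integral_nonpos (hbound.trans ?_))⟩
  have hnum : n * p * ‖c‖ ^ 2 ≤ 0 :=
    mul_nonpos_of_nonpos_of_nonneg (mul_nonpos_of_nonneg_of_nonpos n.cast_nonneg hp.2) (sq_nonneg _)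
  exact mul_nonpos_of_nonpos_of_nonneg
    (div_nonpos_of_nonpos_of_nonneg hnum (by positivity)) hV.le
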